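/- Let P = abcdef be a (simple) hexagon with vertices labeled counterclockwise, and let {a, c, e} be an independent triple (no two are endpoints of a common edge). If the open triangle with vertices a, c, e is contained in P, then the intersection of that triangle with Wedge(a) is a triangle of the form conv(a, c', e') minus its boundary, where the segment c'e' is a nondegenerate subsegment of the segment ce. -/

import Mathlib

open scoped BigOperators

/-- Points in the plane. -/
abbrev Pt := ℝ × ℝ

/-- 2×2 determinant (cross product) of two plane vectors. -/
noncomputable def det2 (p q : Pt) : ℝ := p.1 * q.2 - p.2 * q.1

/-- Open half-plane strictly to the left of the directed line from `p` to `q`. -/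
def Lhp (p q : Pt) : Set Pt := {x | 0 < det2 (q - p) (x - p)}

/-- Open half-plane strictly to the right of the directed line from `p` to `q`. -/
def Rhp (p q : Pt) : Set Pt := {x | det2 (q - p) (x - p) < 0}

/-- The boundary of the polygon with vertices `v 0, …, v (n-1)`:
the union of its (cyclically consecutive) edges. -/
def polyBoundary {n : ℕ} [NeZero n] (v : Fin n → Pt) : Set Pt :=
  ⋃ i : Fin n, segment ℝ (v i) (v (i + 1))

/-- `v` describes a simple polygon: at least 3 distinct vertices, and two distinct
edges may only meet at a common endpoint. -/
def IsSimplePolygon {n : ℕ} [NeZero n] (v : Fin n → Pt) : Prop :=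
  3 ≤ n ∧ Function.Injective v ∧
    ∀ i j : Fin n, i ≠ j →
      segment ℝ (v i) (v (i + 1)) ∩ segment ℝ (v j) (v (j + 1)) ⊆
        ({v i, v (i + 1)} ∩ {v j, v (j + 1)} : Set Pt)

/-- The interior of the polygon: the union of the bounded connected components of the
complement of the boundary. -/
def polyInterior {n : ℕ} [NeZero n] (v : Fin n → Pt) : Set Pt :=
  {x | x ∉ polyBoundary v ∧
    Bornology.IsBounded (connectedComponentIn (polyBoundary v)ᶜ x)}

/-- The (closed) polygonal region: interior together with boundary. -/
def polyRegion {n : ℕ} [NeZero n] (v : Fin n → Pt) : Set Pt :=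
  polyBoundary v ∪ polyInterior v

/-- Twice the signed area of the polygon. -/
noncomputable def signedArea2 {n : ℕ} [NeZero n] (v : Fin n → Pt) : ℝ :=
  ∑ i : Fin n, det2 (v i) (v (i + 1))

/-- The vertices are listed in counterclockwise order. -/
def IsCCW {n : ℕ} [NeZero n] (v : Fin n → Pt) : Prop := 0 < signedArea2 v

/-- The vertex `v i` of a counterclockwise polygon is strictly convex
(interior angle strictly less than 180°). -/
def StrictlyConvexAt {n : ℕ} [NeZero n] (v : Fin n → Pt) (i : Fin n) : Prop :=
  0 < det2 (v i - v (i - 1)) (v (i + 1) - v i)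

/-- The vertex `v i` of a counterclockwise polygon is reflex
(interior angle greater than or equal to 180°). -/
def ReflexAt {n : ℕ} [NeZero n] (v : Fin n → Pt) (i : Fin n) : Prop :=
  det2 (v i - v (i - 1)) (v (i + 1) - v i) ≤ 0

/-- The wedge of vertex `v i`:  `L(v⁻, v) ∩ R(v⁺, v) ∩ interior P`. -/
def Wedge {n : ℕ} [NeZero n] (v : Fin n → Pt) (i : Fin n) : Set Pt :=
  Lhp (v (i - 1)) (v i) ∩ Rhp (v (i + 1)) (v i) ∩ polyInterior v

/-- `x` sees `y` inside the polygon `v`: the segment `xy` is contained in the region. -/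
def Sees {n : ℕ} [NeZero n] (v : Fin n → Pt) (x y : Pt) : Prop :=
  segment ℝ x y ⊆ polyRegion v

/-- The kernel of the polygon: the points of the region that see every point of it. -/
def polyKernel {n : ℕ} [NeZero n] (v : Fin n → Pt) : Set Pt :=
  {x ∈ polyRegion v | ∀ y ∈ polyRegion v, segment ℝ x y ⊆ polyRegion v}

/-- The open triangle on three points. -/
def openTriangle (a b c : Pt) : Set Pt := interior (convexHull ℝ {a, b, c})

/-- `a b c d` (in counterclockwise order) form a strictly convex quadrilateral. -/
def StrictConvexQuad (a b c d : Pt) : Prop :=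
  0 < det2 (b - a) (c - b) ∧ 0 < det2 (c - b) (d - c) ∧
    0 < det2 (d - c) (a - d) ∧ 0 < det2 (a - d) (b - a)

/-- The closed region of a quadrilateral cell. -/
noncomputable def quadSet (q : Pt × Pt × Pt × Pt) : Set Pt :=
  convexHull ℝ {q.1, q.2.1, q.2.2.1, q.2.2.2}

/-- The closed region of a triangular cell. -/
noncomputable def triSet (t : Pt × Pt × Pt) : Set Pt :=
  convexHull ℝ {t.1, t.2.1, t.2.2}

/-- The vertices of a quadrilateral cell. -/
noncomputable def quadVerts (q : Pt × Pt × Pt × Pt) : Finset Pt :=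
  {q.1, q.2.1, q.2.2.1, q.2.2.2}

/-- The vertices of a triangular cell. -/
noncomputable def triVerts (t : Pt × Pt × Pt) : Finset Pt :=
  {t.1, t.2.1, t.2.2}

/-- A strictly convex quadrangulation of a finite planar point set `S`:
a decomposition of `conv S` into strictly convex quadrilaterals and at most one
(nondegenerate) triangle, with pairwise disjoint interiors, whose vertex set contains
`S`, and such that no point of `S` is interior to a cell. -/
structure ConvexQuadrangulation (S : Finset Pt) where
  quads : Finset (Pt × Pt × Pt × Pt)
  tris : Finset (Pt × Pt × Pt)
  tris_card : tris.card ≤ 1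
  quads_convex : ∀ q ∈ quads, StrictConvexQuad q.1 q.2.1 q.2.2.1 q.2.2.2
  tris_nondeg : ∀ t ∈ tris, 0 < det2 (t.2.1 - t.1) (t.2.2 - t.2.1)
  covers : ((⋃ q ∈ quads, quadSet q) ∪ ⋃ t ∈ tris, triSet t) = convexHull ℝ (S : Set Pt)
  cells_disjoint : ((quadSet '' quads) ∪ (triSet '' tris)).Pairwise
    fun A B => interior A ∩ interior B = ∅
  verts_cover : (S : Set Pt) ⊆
    ((quads.biUnion quadVerts ∪ tris.biUnion triVerts : Finset Pt) : Set Pt)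
  no_pt_in_quad_interior : ∀ q ∈ quads, ∀ p ∈ S, p ∉ interior (quadSet q)
  no_pt_in_tri_interior : ∀ t ∈ tris, ∀ p ∈ S, p ∉ interior (triSet t)

/-- The Steiner points of a quadrangulation: vertices of the decomposition not in `S`. -/
noncomputable def steinerPoints (S : Finset Pt) (Q : ConvexQuadrangulation S) : Finset Pt :=
  (Q.quads.biUnion quadVerts ∪ Q.tris.biUnion triVerts) \ S



/-- Convex subsets of the complement of the boundary are all inside or all outside. -/
lemma polyInterior_of_preconnected {n : ℕ} [NeZero n] (v : Fin n → Pt) {C : Set Pt}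
    (hC : IsPreconnected C) (hd : C ⊆ (polyBoundary v)ᶜ) {x y : Pt} (hx : x ∈ C) (hy : y ∈ C)
    (hxi : x ∈ polyInterior v) : y ∈ polyInterior v := by
  refine ⟨hd hy, ?_⟩
  have h1 : y ∈ connectedComponentIn (polyBoundary v)ᶜ x :=
    hC.subset_connectedComponentIn hx hd hy
  rw [← connectedComponentIn_eq h1]
  exact hxi.2

lemma not_polyInterior_of_ray {n : ℕ} [NeZero n] (v : Fin n → Pt) (p u : Pt) (hu : u ≠ 0)
    (h : ∀ s : ℝ, 0 ≤ s → p + s • u ∉ polyBoundary v) : p ∉ polyInterior v := by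
  intro hp
  have hC : IsPreconnected ((fun s : ℝ => p + s • u) '' Set.Ici 0) :=
    isPreconnected_Ici.image _ (by fun_prop)
  have hsub := hC.subset_connectedComponentIn (x := p) (F := (polyBoundary v)ᶜ)
    ⟨0, by simp, by simp⟩ (by rintro _ ⟨s, hs, rfl⟩; exact h s hs)
  have hb := hp.2.subset hsub
  obtain ⟨R, hR⟩ := hb.exists_norm_le
  have hun : 0 < ‖u‖ := norm_pos_iff.mpr hu
  have hR0 : 0 ≤ R := le_trans (norm_nonneg _) (hR (p + (0:ℝ) • u) ⟨0, by simp, rfl⟩)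
  have hs0 : 0 ≤ (R + ‖p‖ + 1) / ‖u‖ := by positivity
  have := hR _ ⟨(R + ‖p‖ + 1) / ‖u‖, hs0, rfl⟩
  have h2 : ‖((R + ‖p‖ + 1) / ‖u‖) • u‖ = R + ‖p‖ + 1 := by
    rw [norm_smul, Real.norm_of_nonneg hs0]; field_simp
  have h3 := norm_sub_le (p + ((R + ‖p‖ + 1) / ‖u‖) • u) p
  simp only [add_sub_cancel_left] at h3
  rw [h2] at h3
  simp only at this
  linarith

lemma isCompact_segment' (p q : Pt) : IsCompact (segment ℝ p q) := by
  rw [segment_eq_image_lineMap]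
  exact isCompact_Icc.image (AffineMap.lineMap_continuous)

lemma isCompact_polyBoundary {n : ℕ} [NeZero n] (v : Fin n → Pt) :
    IsCompact (polyBoundary v) := isCompact_iUnion fun _ => isCompact_segment' _ _

/-- Some boundary point is not interior to the region. -/
lemma exists_bad {n : ℕ} [NeZero n] (v : Fin n → Pt) :
    ∃ p ∈ polyBoundary v, p ∉ interior (polyRegion v) := by
  obtain ⟨p, hp, hmax⟩ := (isCompact_polyBoundary v).exists_isMaxOn
    ⟨v 0, Set.mem_iUnion.2 ⟨0, left_mem_segment _ _ _⟩⟩ (f := Prod.fst) continuous_fst.continuousOn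
  refine ⟨p, hp, fun hi => ?_⟩
  have hout : ∀ s : ℝ, 0 < s → p + s • ((1, 0) : Pt) ∉ polyRegion v := by
    intro s hs hmem
    have hb : ∀ s : ℝ, 0 < s → p + s • ((1, 0) : Pt) ∉ polyBoundary v := by
      intro s hs hm
      have := hmax hm
      simp at this
      linarith
    rcases hmem with hm | hm
    · exact hb s hs hm
    · refine not_polyInterior_of_ray v _ (1, 0) (by simp) ?_ hm
      intro t ht
      rw [add_assoc, ← add_smul]
      exact hb _ (by linarith)
  have hc : Filter.Tendsto (fun s : ℝ => p + s • ((1, 0) : Pt)) (nhds 0) (nhds p) := by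
    have : Continuous (fun s : ℝ => p + s • ((1, 0) : Pt)) := by fun_prop
    simpa using this.tendsto 0
  have h1 := hc.eventually (mem_interior_iff_mem_nhds.1 hi)
  obtain ⟨ε, he, hε⟩ := Metric.eventually_nhds_iff.1 h1
  exact hout (ε/2) (by linarith) (hε (by simp [abs_of_pos he]; linarith))

lemma eq_add_div_mul {x p N D u : ℝ} (hD : D ≠ 0) (h : (x - p) * D = N * u) :
    x = p + N / D * u := by
  have : x - p = N * u / D := by rw [eq_div_iff hD, h]
  rw [div_mul_eq_mul_div, ← this]; ring

lemma convex_det_pos (u p : Pt) : Convex ℝ {x : Pt | 0 < det2 u (x - p)} := by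
  intro x hx y hy s t hs ht hst
  simp only [Set.mem_ofPred_eq, det2, Prod.fst_sub, Prod.snd_sub, Prod.fst_add, Prod.snd_add,
    Prod.smul_fst, Prod.smul_snd, smul_eq_mul] at hx hy ⊢
  have ht' : t = 1 - s := by linarith
  subst ht'
  have : u.1 * (s * x.2 + (1 - s) * y.2 - p.2) - u.2 * (s * x.1 + (1 - s) * y.1 - p.1)
    = s * (u.1 * (x.2 - p.2) - u.2 * (x.1 - p.1))
      + (1 - s) * (u.1 * (y.2 - p.2) - u.2 * (y.1 - p.1)) := by ring
  rw [this]
  rcases hs.eq_or_lt with h | h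
  · subst h; simpa using hy
  · have := mul_pos h hx
    have := mul_nonneg ht hy.le
    linarith

lemma mem_closure_of_dir (B S : Set Pt) (hBo : IsOpen B) (q d : Pt) (hq : q ∈ B)
    (h : ∀ δ : ℝ, 0 < δ → q + δ • d ∈ S) : q ∈ closure (B ∩ S) := by
  rw [mem_closure_iff]
  intro o ho hqo
  have hc : Filter.Tendsto (fun s : ℝ => q + s • d) (nhds 0) (nhds q) := by
    have : Continuous (fun s : ℝ => q + s • d) := by fun_prop
    simpa using this.tendsto 0
  obtain ⟨ε, he, hε⟩ := Metric.eventually_nhds_iff.1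
    (hc.eventually ((ho.inter hBo).mem_nhds ⟨hqo, hq⟩))
  have := hε (y := ε / 2) (by simp [abs_of_pos he]; linarith)
  exact ⟨_, this.1, this.2, h _ (by linarith)⟩

/-- The union of the two closed rays from `p`. -/
def TwoRays (p u w : Pt) : Set Pt := {x | ∃ l : ℝ, 0 ≤ l ∧ (x = p + l • u ∨ x = p + l • w)}

lemma two_rays_pos (B I : Set Pt) (p u w : Pt) (hB : Convex ℝ B) (hBo : IsOpen B) (hpB : p ∈ B)
    (hdet : 0 < det2 u w) (q : Pt) (hqB : q ∈ B) (hq : q ∈ TwoRays p u w)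
    (hprop : ∀ C : Set Pt, IsPreconnected C → C ⊆ B → C ∩ TwoRays p u w = ∅ → q ∈ closure C → C ⊆ I)
    (x : Pt) (hxB : x ∈ B) (hx : x ∉ TwoRays p u w) : x ∈ I := by
  obtain ⟨u1, u2⟩ := u
  obtain ⟨w1, w2⟩ := w
  obtain ⟨p1, p2⟩ := p
  simp only [det2] at hdet
  have hH1 : Convex ℝ (B ∩ {x : Pt | 0 < det2 (-u1, -u2) (x - (p1, p2))}) :=
    hB.inter (convex_det_pos _ _)
  have hH2 : Convex ℝ (B ∩ {x : Pt | 0 < det2 (w1, w2) (x - (p1, p2))}) :=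
    hB.inter (convex_det_pos _ _)
  have hS1 : Convex ℝ (B ∩ ({x : Pt | 0 < det2 (u1, u2) (x - (p1, p2))} ∩
      {x : Pt | 0 < det2 (-w1, -w2) (x - (p1, p2))})) :=
    hB.inter ((convex_det_pos _ _).inter (convex_det_pos _ _))
  by_cases hxS : x ∈ {x : Pt | 0 < det2 (u1, u2) (x - (p1, p2))} ∩
      {x : Pt | 0 < det2 (-w1, -w2) (x - (p1, p2))}
  · refine hprop _ hS1.isPreconnected Set.inter_subset_left ?_ ?_ ⟨hxB, hxS⟩
    · ext ⟨y1, y2⟩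
      simp only [Set.mem_inter_iff, Set.mem_empty_iff_false, iff_false]
      rintro ⟨⟨-, h1, h2⟩, l, hl, h | h⟩ <;>
      · simp only [Prod.ext_iff, Prod.fst_add, Prod.snd_add, Prod.smul_fst, Prod.smul_snd,
          smul_eq_mul] at h
        obtain ⟨rfl, rfl⟩ := h
        simp only [Set.mem_ofPred_eq, det2, Prod.fst_sub, Prod.snd_sub] at h1 h2
        ring_nf at h1 h2
        linarith
    · refine mem_closure_of_dir _ _ hBo _ (u1 + w1, u2 + w2) hqB ?_
      intro δ hδ
      have hm := mul_pos hδ hdet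
      obtain ⟨l, hl, h | h⟩ := hq <;>
      · have hm2 := mul_nonneg hl hdet.le
        subst h
        constructor <;>
        · simp [det2]
          ring_nf at hm hm2 ⊢
          linarith
  · have hU : IsPreconnected ((B ∩ {x : Pt | 0 < det2 (-u1, -u2) (x - (p1, p2))}) ∪
        (B ∩ {x : Pt | 0 < det2 (w1, w2) (x - (p1, p2))})) := by
      obtain ⟨z, hz⟩ : (B ∩ ({x : Pt | 0 < det2 (-u1, -u2) (x - (p1, p2))} ∩
          {x : Pt | 0 < det2 (w1, w2) (x - (p1, p2))})).Nonempty := by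
        have := mem_closure_of_dir B ({x : Pt | 0 < det2 (-u1, -u2) (x - (p1, p2))} ∩
          {x : Pt | 0 < det2 (w1, w2) (x - (p1, p2))}) hBo (p1, p2) (-u1 - w1, -u2 - w2) hpB (by
            intro δ hδ
            have hm := mul_pos hδ hdet
            constructor <;>
            · simp [det2]
              ring_nf at hm ⊢
              linarith)
        exact closure_nonempty_iff.1 ⟨_, this⟩
      exact hH1.isPreconnected.union z ⟨hz.1, hz.2.1⟩ ⟨hz.1, hz.2.2⟩ hH2.isPreconnected
    refine hprop _ hU (Set.union_subset Set.inter_subset_left Set.inter_subset_left) ?_ ?_ ?_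
    · ext ⟨y1, y2⟩
      simp only [Set.mem_inter_iff, Set.mem_empty_iff_false, iff_false]
      rintro ⟨⟨-, h1⟩ | ⟨-, h1⟩, l, hl, h | h⟩ <;>
      · have hm2 := mul_nonneg hl hdet.le
        simp only [Prod.ext_iff, Prod.fst_add, Prod.snd_add, Prod.smul_fst, Prod.smul_snd,
          smul_eq_mul] at h
        obtain ⟨rfl, rfl⟩ := h
        simp only [Set.mem_ofPred_eq, det2, Prod.fst_sub, Prod.snd_sub] at h1
        ring_nf at h1 hm2
        linarith
    · obtain ⟨l, hl, h | h⟩ := hq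
      · refine closure_mono Set.subset_union_left
          (mem_closure_of_dir _ _ hBo _ (-w1, -w2) hqB ?_)
        intro δ hδ
        have hm := mul_pos hδ hdet
        subst h
        simp [det2]
        ring_nf at hm ⊢
        linarith
      · refine closure_mono Set.subset_union_right
          (mem_closure_of_dir _ _ hBo _ (-u1, -u2) hqB ?_)
        intro δ hδ
        have hm := mul_pos hδ hdet
        subst h
        simp [det2]
        ring_nf at hm ⊢
        linarith
    · obtain ⟨x1, x2⟩ := x
      by_contra hcon
      simp only [Set.mem_union, Set.mem_inter_iff, hxB, true_and, Set.mem_ofPred_eq, det2,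
        Prod.fst_sub, Prod.snd_sub, not_or, not_lt, not_and] at hcon hxS
      obtain ⟨h1, h2⟩ := hcon
      by_cases h3 : u1 * (x2 - p2) - u2 * (x1 - p1) = 0
      · apply hx
        refine ⟨((x1 - p1) * w2 - (x2 - p2) * w1) / (u1 * w2 - u2 * w1),
          div_nonneg (by linarith) hdet.le, Or.inl ?_⟩
        ext
        · simp only [Prod.fst_add, Prod.snd_add, Prod.smul_fst, Prod.smul_snd, smul_eq_mul]
          refine eq_add_div_mul hdet.ne' ?_
          linear_combination w1 * h3
        · simp only [Prod.fst_add, Prod.snd_add, Prod.smul_fst, Prod.smul_snd, smul_eq_mul]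
          refine eq_add_div_mul hdet.ne' ?_
          linear_combination w2 * h3
      · have h4 : 0 < u1 * (x2 - p2) - u2 * (x1 - p1) :=
          lt_of_le_of_ne (by linarith) (Ne.symm h3)
        have h5 := hxS h4
        have h6 : w1 * (x2 - p2) - w2 * (x1 - p1) = 0 := by linarith
        apply hx
        refine ⟨(u1 * (x2 - p2) - u2 * (x1 - p1)) / (u1 * w2 - u2 * w1),
          div_nonneg (by linarith) hdet.le, Or.inr ?_⟩
        ext
        · simp only [Prod.fst_add, Prod.snd_add, Prod.smul_fst, Prod.smul_snd, smul_eq_mul]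
          refine eq_add_div_mul hdet.ne' ?_
          linear_combination (-u1) * h6
        · simp only [Prod.fst_add, Prod.snd_add, Prod.smul_fst, Prod.smul_snd, smul_eq_mul]
          refine eq_add_div_mul hdet.ne' ?_
          linear_combination (-u2) * h6

lemma two_rays_opp (B I : Set Pt) (p u w : Pt) (hB : Convex ℝ B) (hBo : IsOpen B)
    (hu : u ≠ 0) (k : ℝ) (hk : 0 < k) (hw : w = -(k • u))
    (q : Pt) (hqB : q ∈ B) (hq : q ∈ TwoRays p u w)
    (hprop : ∀ C : Set Pt, IsPreconnected C → C ⊆ B → C ∩ TwoRays p u w = ∅ → q ∈ closure C → C ⊆ I)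
    (x : Pt) (hxB : x ∈ B) (hx : x ∉ TwoRays p u w) : x ∈ I := by
  obtain ⟨u1, u2⟩ := u
  obtain ⟨p1, p2⟩ := p
  subst hw
  have hpos : 0 < u1 * u1 + u2 * u2 := by
    by_contra h
    apply hu
    have h1 : u1 = 0 := by nlinarith [mul_self_nonneg u1, mul_self_nonneg u2]
    have h2 : u2 = 0 := by nlinarith [mul_self_nonneg u1, mul_self_nonneg u2]
    simp [h1, h2]
  have main : ∀ σ : ℝ, σ * σ = 1 → 0 < det2 (σ * u1, σ * u2) (x - (p1, p2)) → x ∈ I := by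
    intro σ hσ hs
    have hS : Convex ℝ (B ∩ {x : Pt | 0 < det2 (σ * u1, σ * u2) (x - (p1, p2))}) :=
      hB.inter (convex_det_pos _ _)
    refine hprop _ hS.isPreconnected Set.inter_subset_left ?_ ?_ ⟨hxB, hs⟩
    · ext ⟨y1, y2⟩
      simp only [Set.mem_inter_iff, Set.mem_empty_iff_false, iff_false]
      rintro ⟨⟨-, h1⟩, l, hl, h | h⟩ <;>
      · simp only [Prod.ext_iff, Prod.fst_add, Prod.snd_add, Prod.smul_fst, Prod.smul_snd,
          smul_eq_mul, Prod.fst_neg, Prod.snd_neg] at h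
        obtain ⟨rfl, rfl⟩ := h
        simp only [Set.mem_ofPred_eq, det2, Prod.fst_sub, Prod.snd_sub] at h1
        ring_nf at h1
        linarith
    · refine mem_closure_of_dir _ _ hBo _ (-(σ * u2), σ * u1) hqB ?_
      intro δ hδ
      have hm := mul_pos hδ hpos
      have e1 : δ * (u1 * u1 + u2 * u2) = (σ * σ) * (δ * (u1 * u1 + u2 * u2)) := by rw [hσ]; ring
      rw [e1] at hm
      obtain ⟨l, hl, h | h⟩ := hq <;>
      · subst h
        simp [det2]
        ring_nf at hm ⊢
        linarith
  rcases lt_trichotomy (det2 (u1, u2) (x - (p1, p2))) 0 with h | h | h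
  · refine main (-1) (by norm_num) ?_
    simp only [det2] at h ⊢
    linarith
  · exfalso
    obtain ⟨x1, x2⟩ := x
    simp only [det2, Prod.fst_sub, Prod.snd_sub] at h
    have hpos' := hpos.ne'
    have e1 : (x1, x2) = ((p1, p2) : Pt) +
        (((x1 - p1) * u1 + (x2 - p2) * u2) / (u1 * u1 + u2 * u2)) • (u1, u2) := by
      ext
      · simp only [Prod.fst_add, Prod.snd_add, Prod.smul_fst, Prod.smul_snd, smul_eq_mul]
        refine eq_add_div_mul hpos' ?_
        linear_combination (-u2) * h
      · simp only [Prod.fst_add, Prod.snd_add, Prod.smul_fst, Prod.smul_snd, smul_eq_mul]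
        refine eq_add_div_mul hpos' ?_
        linear_combination (u1) * h
    rcases le_total 0 (((x1 - p1) * u1 + (x2 - p2) * u2) / (u1 * u1 + u2 * u2)) with h0 | h0
    · exact hx ⟨_, h0, Or.inl e1⟩
    · refine hx ⟨-(((x1 - p1) * u1 + (x2 - p2) * u2) / (u1 * u1 + u2 * u2)) / k,
        div_nonneg (by linarith) hk.le, Or.inr ?_⟩
      rw [e1, smul_neg, smul_smul, div_mul_cancel₀ _ hk.ne', neg_smul, neg_neg]
  · refine main 1 (by norm_num) ?_
    simp only [det2] at h ⊢
    linarith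

lemma two_rays (B I : Set Pt) (p u w : Pt) (hB : Convex ℝ B) (hBo : IsOpen B) (hpB : p ∈ B)
    (hu : u ≠ 0) (hw : w ≠ 0) (hk : ¬ ∃ k : ℝ, 0 < k ∧ w = k • u)
    (q : Pt) (hqB : q ∈ B) (hq : q ∈ TwoRays p u w)
    (hprop : ∀ C : Set Pt, IsPreconnected C → C ⊆ B → C ∩ TwoRays p u w = ∅ → q ∈ closure C → C ⊆ I)
    (x : Pt) (hxB : x ∈ B) (hx : x ∉ TwoRays p u w) : x ∈ I := by
  rcases lt_trichotomy (det2 u w) 0 with h | h | h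
  · have hcomm : TwoRays p u w = TwoRays p w u := by
      ext y; simp only [TwoRays, Set.mem_ofPred_eq, or_comm]
    rw [hcomm] at hq hprop hx
    exact two_rays_pos B I p w u hB hBo hpB (by simp only [det2] at h ⊢; linarith) q hqB hq hprop
      x hxB hx
  · have hwk : ∃ k : ℝ, w = k • u := by
      obtain ⟨u1, u2⟩ := u
      obtain ⟨w1, w2⟩ := w
      simp only [det2] at h
      by_cases h1 : u1 = 0
      · have h2 : u2 ≠ 0 := by rintro rfl; exact hu (by simp [h1])
        subst h1
        have : w1 = 0 := by
          have : u2 * w1 = 0 := by linarith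
          simpa [h2] using this
        exact ⟨w2 / u2, by ext <;> simp [this, h2]⟩
      · refine ⟨w1 / u1, ?_⟩
        ext
        · simp [h1]
        · simp
          field_simp
          linarith
    obtain ⟨k, rfl⟩ := hwk
    have hk0 : k < 0 := by
      rcases lt_trichotomy k 0 with h | h | h
      · exact h
      · subst h; simp at hw
      · exact absurd ⟨k, h, rfl⟩ hk
    exact two_rays_opp B I p u _ hB hBo hu (-k) (by linarith) (by simp) q hqB hq hprop x hxB hx
  · exact two_rays_pos B I p u w hB hBo hpB h q hqB hq hprop x hxB hx
/-- Locally a segment issued from `p` is a ray. -/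
lemma segment_local_ray (p A : Pt) (hA : A ≠ p) :
    ∀ᶠ x in nhds p, (x ∈ segment ℝ p A ↔ ∃ l : ℝ, 0 ≤ l ∧ x = p + l • (A - p)) := by
  have hpos : 0 < ‖A - p‖ := norm_pos_iff.2 (sub_ne_zero.2 hA)
  filter_upwards [Metric.ball_mem_nhds p hpos] with x hx
  rw [segment_eq_image']
  constructor
  · rintro ⟨l, hl, rfl⟩
    exact ⟨l, hl.1, rfl⟩
  · rintro ⟨l, hl, rfl⟩
    refine ⟨l, ⟨hl, ?_⟩, rfl⟩
    rw [Metric.mem_ball, dist_eq_norm, add_sub_cancel_left, norm_smul, Real.norm_of_nonneg hl] at hx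
    nlinarith

lemma segment_eq_union_of_mem (p A B : Pt) (hp : p ∈ segment ℝ A B) :
    segment ℝ A B = segment ℝ p A ∪ segment ℝ p B := by
  apply Set.Subset.antisymm
  · rw [segment_eq_image'] at hp
    obtain ⟨t, ht, rfl⟩ := hp
    intro x hx
    rw [segment_eq_image'] at hx
    obtain ⟨s, hs, rfl⟩ := hx
    have key : ∀ r : ℝ, A + r • (B - A) = AffineMap.lineMap A B r := by
      intro r; rw [AffineMap.lineMap_apply]; simp [add_comm]
    simp only [key]
    have hA : A = AffineMap.lineMap (k := ℝ) A B (0:ℝ) := by simp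
    have hB : B = AffineMap.lineMap (k := ℝ) A B (1:ℝ) := by simp
    rcases le_total s t with h | h
    · left
      have : AffineMap.lineMap A B s ∈ AffineMap.lineMap A B '' segment ℝ t (0:ℝ) :=
        ⟨s, by rw [segment_symm, segment_eq_Icc ht.1]; exact ⟨hs.1, h⟩, rfl⟩
      rw [image_segment] at this
      simpa using this
    · right
      have : AffineMap.lineMap A B s ∈ AffineMap.lineMap A B '' segment ℝ t (1:ℝ) :=
        ⟨s, by rw [segment_eq_Icc ht.2]; exact ⟨h, hs.2⟩, rfl⟩
      rw [image_segment] at this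
      simpa using this
  · apply Set.union_subset
    · exact (convex_segment A B).segment_subset hp (left_mem_segment _ _ _)
    · exact (convex_segment A B).segment_subset hp (right_mem_segment _ _ _)

/-- Local structure of the boundary of a simple hexagon. -/
lemma local_structure (v : Fin 6 → Pt) (hs : IsSimplePolygon v) (p : Pt)
    (hp : p ∈ polyBoundary v) :
    ∃ A B : Pt, A ≠ p ∧ B ≠ p ∧ (¬ ∃ k : ℝ, 0 < k ∧ B - p = k • (A - p)) ∧
      ∀ᶠ x in nhds p, (x ∈ polyBoundary v ↔ x ∈ segment ℝ p A ∪ segment ℝ p B) := by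
  obtain ⟨-, hinj, hsim⟩ := hs
  have hfar : ∀ᶠ x in nhds p, ∀ i : Fin 6, p ∉ segment ℝ (v i) (v (i + 1)) →
      x ∉ segment ℝ (v i) (v (i + 1)) := by
    rw [Filter.eventually_all]
    intro i
    by_cases h : p ∈ segment ℝ (v i) (v (i + 1))
    · simp [h]
    · filter_upwards [(isCompact_segment' (v i) (v (i+1))).isClosed.isOpen_compl.mem_nhds h] with x hx _
      exact hx
  by_cases hv : ∃ i, p = v i
  · obtain ⟨i, rfl⟩ := hv
    have hne1 : v (i - 1) ≠ v i := fun h =>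
      absurd (hinj h) ((by decide : ∀ i : Fin 6, i - 1 ≠ i) i)
    have hne2 : v (i + 1) ≠ v i := fun h =>
      absurd (hinj h) ((by decide : ∀ i : Fin 6, i + 1 ≠ i) i)
    have hne3 : v (i + 1) ≠ v (i - 1) := fun h =>
      absurd (hinj h) ((by decide : ∀ i : Fin 6, i + 1 ≠ i - 1) i)
    have hij : i - 1 ≠ i := (by decide : ∀ i : Fin 6, i - 1 ≠ i) i
    have hsub := hsim (i - 1) i hij
    rw [sub_add_cancel] at hsub
    refine ⟨v (i - 1), v (i + 1), hne1, hne2, ?_, ?_⟩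
    · rintro ⟨k, hk, hkk⟩
      rcases le_total k 1 with h1 | h1
      · have hm : v (i + 1) ∈ segment ℝ (v (i - 1)) (v i) := by
          rw [segment_symm, segment_eq_image']
          exact ⟨k, ⟨hk.le, h1⟩, by simp only [← hkk]; abel⟩
        have := (hsub ⟨hm, right_mem_segment _ _ _⟩).1
        rcases this with h | h
        · exact hne3 h
        · exact hne2 h
      · have hm : v (i - 1) ∈ segment ℝ (v i) (v (i + 1)) := by
          rw [segment_eq_image']
          refine ⟨k⁻¹, ⟨by positivity, inv_le_one_of_one_le₀ h1⟩, ?_⟩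
          simp only [hkk, smul_smul, inv_mul_cancel₀ hk.ne', one_smul]; abel
        have := (hsub ⟨left_mem_segment _ _ _, hm⟩).2
        rcases this with h | h
        · exact hne1 h
        · exact hne3 h.symm
    · filter_upwards [hfar] with x hx
      constructor
      · intro h
        obtain ⟨j, hj⟩ := Set.mem_iUnion.1 h
        have hpj : v i ∈ segment ℝ (v j) (v (j + 1)) := by
          by_contra hc; exact hx j hc hj
        by_cases hji : j = i
        · subst hji; exact Or.inr hj
        · have := (hsim j i hji ⟨hpj, left_mem_segment _ _ _⟩).1
          rcases this with h | h
          · exact absurd (hinj h).symm hji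
          · have : i = j + 1 := hinj h
            subst this
            left
            rw [segment_symm]
            simpa using hj
      · rintro (h | h)
        · refine Set.mem_iUnion.2 ⟨i - 1, ?_⟩
          rw [sub_add_cancel, segment_symm]; exact h
        · exact Set.mem_iUnion.2 ⟨i, h⟩
  · push Not at hv
    obtain ⟨i, hi⟩ := Set.mem_iUnion.1 hp
    refine ⟨v i, v (i + 1), (hv i).symm, (hv (i + 1)).symm, ?_, ?_⟩
    · rintro ⟨k, hk, hkk⟩
      obtain ⟨s, t, hs, ht, hst, rfl⟩ := hi
      have hA : (s + t * k) • (v i - (s • v i + t • v (i + 1))) = 0 := by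
        rw [add_smul, mul_smul, ← hkk]
        have hs' : s = 1 - t := by linarith
        subst hs'
        module
      have : 0 < s + t * k := by
        rcases hs.eq_or_lt with h | h
        · have : t = 1 := by linarith
          rw [← h, this]; linarith
        · have := mul_nonneg ht hk.le; linarith
      rcases smul_eq_zero.1 hA with h | h
      · exact this.ne' h
      · exact hv i (sub_eq_zero.1 h).symm
    · filter_upwards [hfar] with x hx
      rw [← segment_eq_union_of_mem _ _ _ hi]
      constructor
      · intro h
        obtain ⟨j, hj⟩ := Set.mem_iUnion.1 h
        have hpj : p ∈ segment ℝ (v j) (v (j + 1)) := by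
          by_contra hc; exact hx j hc hj
        by_cases hji : j = i
        · subst hji; exact hj
        · have := (hsim j i hji ⟨hpj, hi⟩).1
          rcases this with h | h
          · exact absurd h (hv _)
          · exact absurd h (hv _)
      · intro h
        exact Set.mem_iUnion.2 ⟨i, h⟩

lemma local_good (v : Fin 6 → Pt) (hs : IsSimplePolygon v) (p : Pt)
    (hp : p ∈ polyBoundary v) (hcl : p ∈ closure (polyBoundary v ∩ interior (polyRegion v))) :
    p ∈ interior (polyRegion v) := by
  obtain ⟨A, B, hA, hB, hk, hloc⟩ := local_structure v hs p hp
  have hev : ∀ᶠ x in nhds p, (x ∈ polyBoundary v ↔ x ∈ TwoRays p (A - p) (B - p)) := by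
    filter_upwards [hloc, segment_local_ray p A hA, segment_local_ray p B hB] with x h1 h2 h3
    rw [h1, Set.mem_union, h2, h3]
    constructor
    · rintro (⟨l, hl, h⟩ | ⟨l, hl, h⟩)
      · exact ⟨l, hl, Or.inl h⟩
      · exact ⟨l, hl, Or.inr h⟩
    · rintro ⟨l, hl, h | h⟩
      · exact Or.inl ⟨l, hl, h⟩
      · exact Or.inr ⟨l, hl, h⟩
  obtain ⟨ε, he, hε⟩ := Metric.eventually_nhds_iff_ball.1 hev
  obtain ⟨q, hqB, hqb, hqi⟩ := mem_closure_iff.1 hcl (Metric.ball p ε) Metric.isOpen_ball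
    (Metric.mem_ball_self he)
  rw [mem_interior]
  refine ⟨Metric.ball p ε, ?_, Metric.isOpen_ball, Metric.mem_ball_self he⟩
  intro x hx
  by_cases hxb : x ∈ polyBoundary v
  · exact Or.inl hxb
  · right
    refine two_rays (Metric.ball p ε) (polyInterior v) p (A - p) (B - p) (convex_ball _ _)
      Metric.isOpen_ball (Metric.mem_ball_self he) (sub_ne_zero.2 hA) (sub_ne_zero.2 hB) hk q hqB
      ((hε q hqB).1 hqb) ?_ x hx (fun h => hxb ((hε x hx).2 h))
    intro C hC hCB hCT hqC y hy
    have hCd : C ⊆ (polyBoundary v)ᶜ := by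
      intro z hz hzb
      have : z ∈ C ∩ TwoRays p (A - p) (B - p) := ⟨hz, (hε z (hCB hz)).1 hzb⟩
      rw [hCT] at this
      exact this
    obtain ⟨z, hzi, hzC⟩ := mem_closure_iff.1 hqC _ isOpen_interior hqi
    have hzI : z ∈ polyInterior v := by
      rcases interior_subset hzi with h | h
      · exact absurd h (hCd hzC)
      · exact h
    exact polyInterior_of_preconnected v hC hCd hzC hy hzI

lemma isPreconnected_polyBoundary (v : Fin 6 → Pt) : IsPreconnected (polyBoundary v) := by
  unfold polyBoundary
  apply IsPreconnected.iUnion_of_chain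
  · intro i; exact (convex_segment _ _).isPreconnected
  · intro i
    by_cases hi : i = Fin.last 5
    · subst hi
      rw [show Order.succ (Fin.last 5) = Fin.last 5 by decide]
      exact ⟨v (Fin.last 5), left_mem_segment _ _ _, left_mem_segment _ _ _⟩
    · have : Order.succ i = i + 1 := by revert i; decide
      rw [this]
      exact ⟨v (i + 1), right_mem_segment _ _ _, left_mem_segment _ _ _⟩

/-- No boundary point is interior to the region. -/
lemma boundary_not_interior (v : Fin 6 → Pt) (hs : IsSimplePolygon v) (p : Pt)
    (hp : p ∈ polyBoundary v) : p ∉ interior (polyRegion v) := by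
  intro hpi
  obtain ⟨b, hb, hbi⟩ := exists_bad v
  have hcov : polyBoundary v ⊆ interior (polyRegion v) ∪
      (closure (polyBoundary v ∩ interior (polyRegion v)))ᶜ := by
    intro x hx
    by_cases h : x ∈ closure (polyBoundary v ∩ interior (polyRegion v))
    · exact Or.inl (local_good v hs x hx h)
    · exact Or.inr h
  obtain ⟨x, hx, hx1, hx2⟩ := isPreconnected_polyBoundary v _ _ isOpen_interior
    isClosed_closure.isOpen_compl hcov ⟨p, hp, hpi⟩
    ⟨b, hb, fun h => hbi (local_good v hs b hb h)⟩
  exact hx2 (subset_closure ⟨hx, hx1⟩)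

lemma tri_subset_interior (v : Fin 6 → Pt) (hs : IsSimplePolygon v) (T : Set Pt) (hT : IsOpen T)
    (h : T ⊆ polyRegion v) : T ⊆ polyInterior v := by
  intro x hx
  rcases h hx with hb | hi
  · exact absurd (interior_maximal h hT hx) (boundary_not_interior v hs x hb)
  · exact hi
lemma mem_seg_iff (x p q : Pt) : x ∈ segment ℝ p q ↔ ∃ t : ℝ, 0 ≤ t ∧ t ≤ 1 ∧
    x.1 = p.1 + t * (q.1 - p.1) ∧ x.2 = p.2 + t * (q.2 - p.2) := by
  rw [segment_eq_image']
  constructor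
  · rintro ⟨t, ht, rfl⟩
    exact ⟨t, ht.1, ht.2, by simp, by simp⟩
  · rintro ⟨t, h0, h1, e1, e2⟩
    exact ⟨t, ⟨h0, h1⟩, by ext <;> simp [e1, e2]⟩

lemma mem_seg_mk {x1 x2 p1 p2 q1 q2 : ℝ} (t : ℝ) (h0 : 0 ≤ t) (h1 : t ≤ 1)
    (e1 : x1 = p1 + t * (q1 - p1)) (e2 : x2 = p2 + t * (q2 - p2)) :
    ((x1, x2) : Pt) ∈ segment ℝ ((p1, p2) : Pt) (q1, q2) :=
  (mem_seg_iff _ _ _).2 ⟨t, h0, h1, e1, e2⟩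

/-- A segment leaving `(0,1)` inside the triangle `a b c` never leaves it. -/
lemma exit_lemma (b1 b2 f1 f2 : ℝ) (hb1 : b1 < 0) (hb2 : 1 - b1 < b2)
    (hab : ∀ x, x ∈ segment ℝ ((0, 1) : Pt) (f1, f2) → x ∉ segment ℝ ((0, 0) : Pt) (b1, b2))
    (hbc : ∀ x, x ∈ segment ℝ ((0, 1) : Pt) (f1, f2) → x ∉ segment ℝ ((b1, b2) : Pt) (1, 0))
    (hT : ∀ x1 x2 : ℝ, 0 < x1 → 0 < x2 → x1 + x2 < 1 →
      (x1, x2) ∉ segment ℝ ((0, 1) : Pt) (f1, f2)) :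
    0 ≤ f2 ∧ 0 ≤ f1 * b2 - b1 * f2 ∧ 0 ≤ b2 - f2 - f1 * b2 + b1 * f2 := by
  by_contra hcon
  have hb2' : 0 < b2 := by linarith
  set g : ℝ → ℝ := fun t => min (1 + t * (f2 - 1)) (min (t * f1 * b2 - b1 * (1 + t * (f2 - 1)))
    (b2 - (1 + t * (f2 - 1)) - t * f1 * b2 + b1 * (1 + t * (f2 - 1)))) with hg
  have hgc : Continuous g := by rw [hg]; fun_prop
  have hg0 : 0 < g 0 := by
    simp only [hg, lt_min_iff]
    refine ⟨by linarith, by linarith, by linarith⟩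
  have hg1 : g 1 < 0 := by
    by_contra h
    push Not at h
    simp only [hg, le_min_iff] at h
    apply hcon
    refine ⟨by linarith [h.1], by linarith [h.2.1], by linarith [h.2.2]⟩
  obtain ⟨t, ⟨ht0, ht1⟩, hgt⟩ := intermediate_value_Icc' (zero_le_one (α := ℝ)) hgc.continuousOn
    (show (0:ℝ) ∈ Set.Icc (g 1) (g 0) from ⟨hg1.le, hg0.le⟩)
  have htpos : 0 < t := by
    rcases ht0.eq_or_lt with h | h
    · rw [← h] at hgt; linarith
    · exact h
  have hall := hgt.ge
  simp only [hg, le_min_iff] at hall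
  obtain ⟨k1, k2, k3⟩ := hall
  have hxs : ((t * f1, 1 + t * (f2 - 1)) : Pt) ∈ segment ℝ ((0, 1) : Pt) (f1, f2) :=
    mem_seg_mk t ht0 ht1 (by ring) (by ring)
  have n3 : b2 - (1 + t * (f2 - 1)) - t * f1 * b2 + b1 * (1 + t * (f2 - 1)) ≠ 0 := by
    intro h0
    refine hbc _ hxs ((mem_seg_iff _ _ _).2
      ⟨1 - (1 + t * (f2 - 1)) / b2, ?_, ?_, ?_, ?_⟩)
    · rw [sub_nonneg, div_le_one hb2']; nlinarith
    · have : 0 ≤ (1 + t * (f2 - 1)) / b2 := by positivity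
      linarith
    · field_simp; linarith
    · field_simp; ring
  have n2 : t * f1 * b2 - b1 * (1 + t * (f2 - 1)) ≠ 0 := by
    intro h0
    refine hab _ hxs ((mem_seg_iff _ _ _).2
      ⟨(1 + t * (f2 - 1)) / b2, by positivity, ?_, ?_, ?_⟩)
    · rw [div_le_one hb2']; nlinarith
    · field_simp; linarith
    · field_simp; ring
  have p2 := lt_of_le_of_ne k2 (Ne.symm n2)
  have p3 := lt_of_le_of_ne k3 (Ne.symm n3)
  have h1 : 1 + t * (f2 - 1) = 0 := by
    by_contra h
    have p1 := lt_of_le_of_ne k1 (Ne.symm h)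
    have : 0 < g t := by
      simp only [hg, lt_min_iff]; exact ⟨p1, p2, p3⟩
    linarith
  rw [h1] at p2 p3
  have q1 : 0 < t * f1 := by
    by_contra hc; nlinarith
  have q2 : t * f1 < 1 := by
    by_contra hc; nlinarith
  have hf2 : f2 < 1 := by
    by_contra hc; nlinarith
  have e1 : ∀ᶠ η : ℝ in nhds 0, 0 < (t - η) * f1 := by
    apply Continuous.tendsto (by fun_prop : Continuous fun η : ℝ => (t - η) * f1) 0 |>.eventually
    exact lt_mem_nhds (by simpa using q1)
  have e2 : ∀ᶠ η : ℝ in nhds 0, (t - η) * f1 + (1 + (t - η) * (f2 - 1)) < 1 := by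
    have hc2 : Continuous fun η : ℝ => (t - η) * f1 + (1 + (t - η) * (f2 - 1)) := by fun_prop
    exact (hc2.tendsto 0).eventually_lt_const
      (by simp only [sub_zero]; rw [h1]; linarith)
  obtain ⟨ε, he, hε⟩ := Metric.eventually_nhds_iff.1 (e1.and e2)
  have hη : 0 < min (ε / 2) (t / 2) := by positivity
  have hη1 : min (ε / 2) (t / 2) ≤ ε / 2 := min_le_left _ _
  have hη2 : min (ε / 2) (t / 2) ≤ t / 2 := min_le_right _ _
  generalize min (ε / 2) (t / 2) = η at hη hη1 hη2
  obtain ⟨r1, r2⟩ := hε (y := η) (by simp [abs_of_pos hη]; linarith)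
  refine hT _ _ r1 ?_ r2 (mem_seg_mk (t - η) (by linarith) (by linarith) (by ring) (by ring))
  nlinarith

lemma edge_disj (v : Fin 6 → Pt) (hs : IsSimplePolygon v) (i j : Fin 6) (h1 : i ≠ j)
    (h2 : i + 1 ≠ j) (h3 : j + 1 ≠ i) (x : Pt) (hx : x ∈ segment ℝ (v i) (v (i + 1))) :
    x ∉ segment ℝ (v j) (v (j + 1)) := by
  intro hy
  obtain ⟨-, hinj, hsim⟩ := hs
  obtain ⟨a, b⟩ := hsim i j h1 ⟨hx, hy⟩
  simp only [Set.mem_insert_iff, Set.mem_singleton_iff] at a b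
  rcases a with a | a <;> rcases b with b | b
  · exact h1 (hinj (a.symm.trans b))
  · exact h3 (hinj (a.symm.trans b)).symm
  · exact h2 (hinj (a.symm.trans b))
  · exact h1 (by simpa using hinj (a.symm.trans b))

lemma mem_polyBoundary_iff (w : Fin 6 → Pt) (x : Pt) : x ∈ polyBoundary w ↔
    (x ∈ segment ℝ (w 0) (w 1) ∨ x ∈ segment ℝ (w 1) (w 2) ∨ x ∈ segment ℝ (w 2) (w 3) ∨
     x ∈ segment ℝ (w 3) (w 4) ∨ x ∈ segment ℝ (w 4) (w 5) ∨ x ∈ segment ℝ (w 5) (w 0)) := by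
  simp only [polyBoundary, Set.mem_iUnion, Fin.exists_fin_succ]
  simp [Fin.exists_fin_succ]

lemma ear_lemma (w : Fin 6 → Pt) (hs : IsSimplePolygon w)
    (h0 : w 0 = (0, 0)) (h2 : w 2 = (1, 0)) (h4 : w 4 = (0, 1))
    (hT : ∀ x1 x2 : ℝ, 0 < x1 → 0 < x2 → x1 + x2 < 1 → (x1, x2) ∉ polyBoundary w)
    (hb : 0 < (w 1).2) :
    ∃ z : ℝ, 0 < z ∧ z < 1 ∧ ∀ y : ℝ, y < 1 - z → (z, y) ∉ polyBoundary w := by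
  have d04 := edge_disj w hs 4 0 (by decide) (by decide) (by decide)
  have d14 := edge_disj w hs 4 1 (by decide) (by decide) (by decide)
  have d03 := edge_disj w hs 3 0 (by decide) (by decide) (by decide)
  have d13 := edge_disj w hs 3 1 (by decide) (by decide) (by decide)
  have d25 := edge_disj w hs 2 5 (by decide) (by decide) (by decide)
  have hne50 : w 5 ≠ w 0 := fun h => absurd (hs.2.1 h) (by decide)
  have hne32 : w 3 ≠ w 2 := fun h => absurd (hs.2.1 h) (by decide)
  have hne30 : w 3 ≠ w 0 := fun h => absurd (hs.2.1 h) (by decide)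
  have hne52 : w 5 ≠ w 2 := fun h => absurd (hs.2.1 h) (by decide)
  simp only [mem_polyBoundary_iff, not_or] at hT ⊢
  change ∀ x, x ∈ segment ℝ (w 4) (w 5) → x ∉ segment ℝ (w 0) (w 1) at d04
  change ∀ x, x ∈ segment ℝ (w 4) (w 5) → x ∉ segment ℝ (w 1) (w 2) at d14
  change ∀ x, x ∈ segment ℝ (w 3) (w 4) → x ∉ segment ℝ (w 0) (w 1) at d03
  change ∀ x, x ∈ segment ℝ (w 3) (w 4) → x ∉ segment ℝ (w 1) (w 2) at d13
  change ∀ x, x ∈ segment ℝ (w 2) (w 3) → x ∉ segment ℝ (w 5) (w 0) at d25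
  rw [segment_symm ℝ (w 3) (w 4)] at d03 d13
  generalize w 1 = b at *
  generalize w 3 = d at *
  generalize w 5 = f at *
  rw [h0, h2, h4] at *
  obtain ⟨b1, b2⟩ := b
  obtain ⟨d1, d2⟩ := d
  obtain ⟨f1, f2⟩ := f
  simp only at hb
  have he1 : ((0, 1) : Pt) ∈ segment ℝ ((0, 1) : Pt) (f1, f2) := left_mem_segment _ _ _
  have hb1 : b1 < 0 := by
    by_contra hc
    push Not at hc
    rcases hc.eq_or_lt with h | h
    · subst h
      by_cases h1 : b2 < 1
      · -- bc enters T
        refine (hT (1/2) (b2/2) (by norm_num) (by linarith) (by linarith)).2.1 ?_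
        exact mem_seg_mk (1/2) (by norm_num) (by norm_num) (by ring) (by ring)
      · refine d04 _ he1 (mem_seg_mk (1 / b2) (by positivity) ?_ (by ring) (by field_simp; ring))
        rw [div_le_one hb]; linarith
    · set t : ℝ := 1 / (b1 + b2 + 1) with ht
      have htp : 0 < t := by positivity
      have ht2 : t * (b1 + b2 + 1) = 1 := by rw [ht]; field_simp
      refine (hT (t * b1) (t * b2) (by positivity) (by positivity) (by nlinarith)).1 ?_
      exact mem_seg_mk t htp.le (by nlinarith) (by ring) (by ring)
  have hb2 : 1 - b1 < b2 := by
    by_contra hc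
    push Not at hc
    rcases hc.eq_or_lt with h | h
    · refine d14 _ he1 (mem_seg_mk ((-b1) / (1 - b1)) (div_nonneg (by linarith) (by linarith)) ?_ ?_ ?_)
      · rw [div_le_one (by linarith)]; linarith
      · have : 1 - b1 ≠ 0 := by linarith
        field_simp; ring
      · have : 1 - b1 ≠ 0 := by linarith
        subst h
        field_simp; ring
    · set s : ℝ := 1 / (2 - 2 * b1) with hsdef
      have hq : 0 < 2 - 2 * b1 := by linarith
      have hsp : 0 < s := by positivity
      have hs2 : s * (2 - 2 * b1) = 1 := by rw [hsdef, one_div, inv_mul_cancel₀ hq.ne']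
      refine (hT (1 - s + s * b1) (s * b2) (by nlinarith) (by positivity) (by nlinarith)).2.1 ?_
      exact mem_seg_mk (1 - s) (by nlinarith) (by linarith) (by ring) (by ring)
  obtain ⟨F1, F2, F3⟩ := exit_lemma b1 b2 f1 f2 hb1 hb2 d04 d14
    (fun x1 x2 a b c => (hT x1 x2 a b c).2.2.2.2.1)
  obtain ⟨D1, D2, D3⟩ := exit_lemma b1 b2 d1 d2 hb1 hb2 d03 d13
    (fun x1 x2 a b c => by rw [segment_symm]; exact (hT x1 x2 a b c).2.2.2.1)
  -- choose z
  have hz : ∃ z : ℝ, 0 < z ∧ z < 1 ∧ (d2 = 0 → z < d1) ∧ (f2 = 0 → f1 < z) := by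
    have hd1 : d2 = 0 → 0 < d1 ∧ d1 < 1 := by
      rintro rfl
      have h1 : 0 ≤ d1 := by by_contra hc; nlinarith
      have h2 : d1 ≤ 1 := by by_contra hc; nlinarith
      refine ⟨lt_of_le_of_ne h1 ?_, lt_of_le_of_ne h2 ?_⟩
      · rintro rfl; exact hne30 rfl
      · rintro rfl; exact hne32 rfl
    have hf1 : f2 = 0 → 0 < f1 ∧ f1 < 1 := by
      rintro rfl
      have h1 : 0 ≤ f1 := by by_contra hc; nlinarith
      have h2 : f1 ≤ 1 := by by_contra hc; nlinarith
      refine ⟨lt_of_le_of_ne h1 ?_, lt_of_le_of_ne h2 ?_⟩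
      · rintro rfl; exact hne50 rfl
      · rintro rfl; exact hne52 rfl
    by_cases hd : d2 = 0 <;> by_cases hf : f2 = 0
    · obtain ⟨a1, a2⟩ := hd1 hd
      obtain ⟨c1, c2⟩ := hf1 hf
      have : f1 < d1 := by
        by_contra hc
        push Not at hc
        subst hd hf
        refine d25 (d1, 0) (right_mem_segment _ _ _) ?_
        refine mem_seg_mk (1 - d1 / f1) ?_ ?_ ?_ (by ring)
        · rw [sub_nonneg, div_le_one c1]; exact hc
        · have : 0 ≤ d1 / f1 := by positivity
          linarith
        · field_simp; ring
      exact ⟨(f1 + d1) / 2, by linarith, by linarith, fun _ => by linarith, fun _ => by linarith⟩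
    · obtain ⟨a1, a2⟩ := hd1 hd
      exact ⟨d1 / 2, by linarith, by linarith, fun _ => by linarith, fun h => absurd h hf⟩
    · obtain ⟨c1, c2⟩ := hf1 hf
      exact ⟨(f1 + 1) / 2, by linarith, by linarith, fun h => absurd h hd, fun _ => by linarith⟩
    · exact ⟨1 / 2, by norm_num, by norm_num, fun h => absurd h hd, fun h => absurd h hf⟩
  obtain ⟨z, hz0, hz1, hzd, hzf⟩ := hz
  refine ⟨z, hz0, hz1, ?_⟩
  intro y hy
  rcases lt_or_ge 0 y with hy0 | hy0
  · exact hT z y hz0 hy0 (by linarith)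
  · refine ⟨?_, ?_, ?_, ?_, ?_, ?_⟩
    · rw [mem_seg_iff]
      rintro ⟨t, t0, t1, e1, e2⟩
      simp only at e1 e2
      have : t = 0 := by
        have := mul_nonneg t0 hb.le
        have : t * b2 = 0 := by linarith
        simpa [hb.ne'] using this
      subst this; linarith
    · rw [mem_seg_iff]
      rintro ⟨t, t0, t1, e1, e2⟩
      simp only at e1 e2
      have : t = 1 := by
        by_contra hne
        have : t < 1 := lt_of_le_of_ne t1 hne
        have := mul_pos (sub_pos.2 this) hb
        linarith
      subst this; linarith
    · rw [mem_seg_iff]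
      rintro ⟨t, t0, t1, e1, e2⟩
      simp only at e1 e2
      rcases t0.eq_or_lt with h | h
      · subst h; linarith
      · have : d2 = 0 := by
          by_contra hne
          have := mul_pos h (lt_of_le_of_ne D1 (Ne.symm hne))
          linarith
        have := hzd this
        nlinarith
    · rw [mem_seg_iff]
      rintro ⟨t, t0, t1, e1, e2⟩
      simp only at e1 e2
      rcases t0.eq_or_lt with h | h
      · subst h
        have : d2 = 0 := by linarith
        have := hzd this
        linarith
      · nlinarith [mul_nonneg (sub_nonneg.2 t1) D1]
    · rw [mem_seg_iff]
      rintro ⟨t, t0, t1, e1, e2⟩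
      simp only at e1 e2
      rcases t1.eq_or_lt with h | h
      · subst h
        have : f2 = 0 := by linarith
        have := hzf this
        linarith
      · nlinarith [mul_nonneg t0 F1]
    · rw [mem_seg_iff]
      rintro ⟨t, t0, t1, e1, e2⟩
      simp only at e1 e2
      rcases t1.eq_or_lt with h | h
      · subst h; linarith
      · have : f2 = 0 := by
          by_contra hne
          have := mul_pos (sub_pos.2 h) (lt_of_le_of_ne F1 (Ne.symm hne))
          linarith
        have := hzf this
        nlinarith

/-- The two half-planes and the triangle cone have a common direction. -/
lemma cone_lemma (w : Fin 6 → Pt) (hs : IsSimplePolygon w)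
    (h0 : w 0 = (0, 0)) (h2 : w 2 = (1, 0)) (h4 : w 4 = (0, 1))
    (hb : (w 1).2 ≤ 0) (hf : (w 5).1 ≤ 0) :
    ∃ y1 y2 : ℝ, 0 < y1 ∧ 0 < y2 ∧ 0 < (w 1).1 * y2 - (w 1).2 * y1 ∧
      0 < (w 5).2 * y1 - (w 5).1 * y2 := by
  have d15 := edge_disj w hs 1 5 (by decide) (by decide) (by decide)
  have d04 := edge_disj w hs 0 4 (by decide) (by decide) (by decide)
  have d50 := hs.2.2 5 0 (by decide)
  have hne10 : w 1 ≠ w 0 := fun h => absurd (hs.2.1 h) (by decide)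
  have hne50 : w 5 ≠ w 0 := fun h => absurd (hs.2.1 h) (by decide)
  have hne51 : w 5 ≠ w 1 := fun h => absurd (hs.2.1 h) (by decide)
  change ∀ x, x ∈ segment ℝ (w 1) (w 2) → x ∉ segment ℝ (w 5) (w 0) at d15
  change ∀ x, x ∈ segment ℝ (w 0) (w 1) → x ∉ segment ℝ (w 4) (w 5) at d04
  change segment ℝ (w 5) (w 0) ∩ segment ℝ (w 0) (w 1) ⊆ {w 5, w 0} ∩ {w 0, w 1} at d50
  generalize w 1 = b at *
  generalize w 3 = d at *
  generalize w 5 = f at *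
  rw [h0, h2, h4] at *
  obtain ⟨b1, b2⟩ := b
  obtain ⟨f1, f2⟩ := f
  simp only at hb hf ⊢
  have ha5 : ((0, 0) : Pt) ∈ segment ℝ ((f1, f2) : Pt) (0, 0) := right_mem_segment _ _ _
  have ha0 : ((0, 0) : Pt) ∈ segment ℝ ((0, 0) : Pt) (b1, b2) := left_mem_segment _ _ _
  -- nondegeneracy
  have B0 : b2 = 0 → 0 < b1 := by
    rintro rfl
    by_contra hc
    refine d15 (0, 0) (mem_seg_mk ((-b1) / (1 - b1)) (div_nonneg (by linarith) (by linarith)) ?_ ?_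
      (by ring)) ha5
    · rw [div_le_one (by linarith)]; linarith
    · have : 1 - b1 ≠ 0 := by linarith
      field_simp; ring
  have F0 : f1 = 0 → 0 < f2 := by
    rintro rfl
    by_contra hc
    have h1 : 0 < 1 - f2 := by linarith
    refine d04 (0, 0) ha0 (mem_seg_mk (1 / (1 - f2)) (by positivity) ?_ (by ring) ?_)
    · rw [div_le_one h1]; linarith
    · field_simp; ring
  by_cases hb1 : 0 ≤ b1
  · have hH : ∀ y1 y2 : ℝ, 0 < y1 → 0 < y2 → 0 < b1 * y2 - b2 * y1 := by
      intro y1 y2 hy1 hy2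
      rcases hb.eq_or_lt with h | h
      · have := B0 h
        rw [h]; nlinarith [mul_pos this hy2]
      · nlinarith [mul_nonneg hb1 hy2.le, mul_pos (neg_pos.2 h) hy1]
    by_cases hf2 : 0 < f2
    · exact ⟨1, 1, one_pos, one_pos, hH _ _ one_pos one_pos, by linarith⟩
    · have hf1 : f1 < 0 := lt_of_le_of_ne hf (fun h => hf2 (F0 h))
      have : 0 < -f2 + 1 := by linarith
      refine ⟨-f1, -f2 + 1, by linarith, this, hH _ _ (by linarith) this, by nlinarith⟩
  · push Not at hb1
    have hb2 : b2 < 0 := lt_of_le_of_ne hb (fun h => absurd (B0 h) (by linarith))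
    by_cases hf2 : 0 ≤ f2
    · refine ⟨-b1 + 1, -b2, by linarith, by linarith, by nlinarith, ?_⟩
      rcases hf.eq_or_lt with h | h
      · have := F0 h
        rw [h]; nlinarith
      · nlinarith
    · push Not at hf2
      have hf1 : f1 < 0 := lt_of_le_of_ne hf (fun h => absurd (F0 h) (by linarith))
      by_cases hdet : 0 < f1 * b2 - f2 * b1
      · -- direction : between the two bounds
        -- y1 / y2 > b1 / b2 , y1 / y2 < f1 / f2
        refine ⟨b1 / b2 + f1 / f2, 2, ?_, two_pos, ?_, ?_⟩
        · have := div_pos_of_neg_of_neg hb1 hb2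
          have := div_pos_of_neg_of_neg hf1 hf2
          linarith
        · have e : b1 * 2 - b2 * (b1 / b2 + f1 / f2) = (f1 * b2 - f2 * b1) / (-f2) := by
            have := hb2.ne; have := hf2.ne
            field_simp; ring
          rw [e]; exact div_pos hdet (by linarith)
        · have e : f2 * (b1 / b2 + f1 / f2) - f1 * 2 = (f1 * b2 - f2 * b1) / (-b2) := by
            have := hb2.ne; have := hf2.ne
            field_simp; ring
          rw [e]; exact div_pos hdet (by linarith)
      · exfalso
        push Not at hdet
        rcases hdet.eq_or_lt with h | h
        · -- same ray
          rcases le_total f1 b1 with hle | hle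
          · have hm : ((b1, b2) : Pt) ∈ segment ℝ ((f1, f2) : Pt) (0, 0) := by
              refine mem_seg_mk (1 - b1 / f1) ?_ ?_ ?_ ?_
              · rw [sub_nonneg, div_le_one_of_neg hf1]; exact hle
              · have := div_pos_of_neg_of_neg hb1 hf1; linarith
              · have := hf1.ne; field_simp; ring
              · have := hf1.ne; field_simp; linarith
            have := (d50 ⟨hm, right_mem_segment _ _ _⟩).1
            rcases this with h | h
            · exact hne51 h.symm
            · exact hne10 h
          · have hm : ((f1, f2) : Pt) ∈ segment ℝ ((0, 0) : Pt) (b1, b2) := by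
              refine mem_seg_mk (f1 / b1) (div_pos_of_neg_of_neg hf1 hb1).le ?_ ?_ ?_
              · rw [div_le_one_of_neg hb1]; exact hle
              · have := hb1.ne; field_simp; ring
              · have := hb1.ne; field_simp; linarith
            have := (d50 ⟨left_mem_segment _ _ _, hm⟩).2
            rcases this with h | h
            · exact hne50 h
            · exact hne51 h
        · -- f = α b + β c, b = γ f + δ e
          have hA : 0 < f2 / b2 := div_pos_of_neg_of_neg hf2 hb2
          have hB : 0 < (f1 * b2 - f2 * b1) / b2 := div_pos_of_neg_of_neg h hb2
          have hC : 0 < b1 / f1 := div_pos_of_neg_of_neg hb1 hf1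
          have hD : 0 < (f1 * b2 - f2 * b1) / f1 := div_pos_of_neg_of_neg h hf1
          have eA : f2 = f2 / b2 * b2 := by have := hb2.ne; field_simp
          have eB : f1 = f2 / b2 * b1 + (f1 * b2 - f2 * b1) / b2 := by
            have := hb2.ne; field_simp; ring
          have eC : b1 = b1 / f1 * f1 := by have := hf1.ne; field_simp
          have eD : b2 = b1 / f1 * f2 + (f1 * b2 - f2 * b1) / f1 := by
            have := hf1.ne; field_simp; ring
          have ePr : (f2 / b2) * (b1 / f1) * (f1 * b2) = f2 * b1 := by
            have := hf1.ne; have := hb2.ne; field_simp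
          have hfb : 0 < f1 * b2 := mul_pos_of_neg_of_neg hf1 hb2
          generalize f2 / b2 = α at *
          generalize (f1 * b2 - f2 * b1) / b2 = β at *
          generalize b1 / f1 = γ at *
          generalize (f1 * b2 - f2 * b1) / f1 = δ at *
          have hAB : α + β < 1 := by
            by_contra hc
            push Not at hc
            have hp : 0 < α + β := by linarith
            have hle : 1 / (α + β) ≤ 1 := by rw [div_le_one hp]; exact hc
            refine d15 (1 / (α + β) * f1, 1 / (α + β) * f2)
              (mem_seg_mk (β / (α + β)) (by positivity) ?_ ?_ ?_)
              (mem_seg_mk (1 - 1 / (α + β)) (by linarith) (by linarith [one_div_pos.2 hp])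
                (by ring) (by ring))
            · rw [div_le_one hp]; linarith
            · rw [eB]; field_simp; ring
            · rw [eA]; field_simp; ring
          have hCD : γ + δ < 1 := by
            by_contra hc
            push Not at hc
            have hp : 0 < γ + δ := by linarith
            have hle : 1 / (γ + δ) ≤ 1 := by rw [div_le_one hp]; exact hc
            refine d04 (1 / (γ + δ) * b1, 1 / (γ + δ) * b2)
              (mem_seg_mk (1 / (γ + δ)) (by positivity) hle (by ring) (by ring))
              (mem_seg_mk (γ / (γ + δ)) (by positivity) ?_ ?_ ?_)
            · rw [div_le_one hp]; linarith
            · rw [eC]; field_simp; ring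
            · rw [eD]; field_simp; ring
          have h1 : α * γ < 1 := by nlinarith
          nlinarith
/-- Affine coordinates with respect to the frame `a, c, e`. -/
noncomputable def cX (a c e x : Pt) : ℝ := det2 (x - a) (e - a) / det2 (c - a) (e - a)
noncomputable def cY (a c e x : Pt) : ℝ := det2 (c - a) (x - a) / det2 (c - a) (e - a)

/-- The affine map attached to the frame `a, c, e`. -/
noncomputable def frameMap (a c e : Pt) : Pt →ᵃ[ℝ] Pt :=
  ((LinearMap.fst ℝ ℝ ℝ).smulRight (c - a) + (LinearMap.snd ℝ ℝ ℝ).smulRight (e - a)).toAffineMap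
    + AffineMap.const ℝ Pt a

lemma frameMap_apply (a c e x : Pt) :
    frameMap a c e x = x.1 • (c - a) + x.2 • (e - a) + a := by
  simp [frameMap]

lemma frameMap_coord (a c e x : Pt) (hD : det2 (c - a) (e - a) ≠ 0) :
    frameMap a c e (cX a c e x, cY a c e x) = x := by
  rw [frameMap_apply]
  unfold cX cY
  have h1 : ∀ N M s t D : ℝ, N / D * s + M / D * t = (N * s + M * t) / D := by
    intros; ring
  ext
  · simp only [Prod.fst_add, Prod.smul_fst, smul_eq_mul, h1]
    have : det2 (x - a) (e - a) * (c - a).1 + det2 (c - a) (x - a) * (e - a).1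
      = (x - a).1 * det2 (c - a) (e - a) := by unfold det2; ring
    rw [this, mul_div_cancel_right₀ _ hD]; simp
  · simp only [Prod.snd_add, Prod.smul_snd, smul_eq_mul, h1]
    have : det2 (x - a) (e - a) * (c - a).2 + det2 (c - a) (x - a) * (e - a).2
      = (x - a).2 * det2 (c - a) (e - a) := by unfold det2; ring
    rw [this, mul_div_cancel_right₀ _ hD]; simp

lemma cX_frameMap (a c e x : Pt) (hD : det2 (c - a) (e - a) ≠ 0) :
    cX a c e (frameMap a c e x) = x.1 := by
  unfold cX
  rw [div_eq_iff hD, frameMap_apply]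
  simp [det2]; ring

lemma cY_frameMap (a c e x : Pt) (hD : det2 (c - a) (e - a) ≠ 0) :
    cY a c e (frameMap a c e x) = x.2 := by
  unfold cY
  rw [div_eq_iff hD, frameMap_apply]
  simp [det2]; ring

lemma frameMap_injective (a c e : Pt) (hD : det2 (c - a) (e - a) ≠ 0) :
    Function.Injective (frameMap a c e) := by
  intro x y h
  ext
  · rw [← cX_frameMap a c e x hD, h, cX_frameMap a c e y hD]
  · rw [← cY_frameMap a c e x hD, h, cY_frameMap a c e y hD]

lemma cX_comb (a c e x y : Pt) (s t : ℝ) (hst : s + t = 1) :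
    cX a c e (s • x + t • y) = s * cX a c e x + t * cX a c e y := by
  unfold cX
  rw [mul_div_assoc', mul_div_assoc', ← add_div]
  congr 1
  have : s = 1 - t := by linarith
  subst this
  simp [det2]; ring

lemma cY_comb (a c e x y : Pt) (s t : ℝ) (hst : s + t = 1) :
    cY a c e (s • x + t • y) = s * cY a c e x + t * cY a c e y := by
  unfold cY
  rw [mul_div_assoc', mul_div_assoc', ← add_div]
  congr 1
  have : s = 1 - t := by linarith
  subst this
  simp [det2]; ring

lemma mem_hull_iff (a c e x : Pt) (hD : det2 (c - a) (e - a) ≠ 0) :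
    x ∈ convexHull ℝ {a, c, e} ↔ 0 ≤ cX a c e x ∧ 0 ≤ cY a c e x ∧ cX a c e x + cY a c e x ≤ 1 := by
  constructor
  · intro hx
    have hK : Convex ℝ {x : Pt | 0 ≤ cX a c e x ∧ 0 ≤ cY a c e x ∧
        cX a c e x + cY a c e x ≤ 1} := by
      rintro x ⟨x1, x2, x3⟩ y ⟨y1, y2, y3⟩ s t hs ht hst
      simp only [Set.mem_ofPred_eq, cX_comb _ _ _ _ _ _ _ hst, cY_comb _ _ _ _ _ _ _ hst]
      refine ⟨by positivity, by positivity, ?_⟩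
      nlinarith [mul_le_mul_of_nonneg_left x3 hs, mul_le_mul_of_nonneg_left y3 ht]
    have hsub : ({a, c, e} : Set Pt) ⊆ {x : Pt | 0 ≤ cX a c e x ∧ 0 ≤ cY a c e x ∧
        cX a c e x + cY a c e x ≤ 1} := by
      have Xa : cX a c e a = 0 := by simp [cX, det2]
      have Ya : cY a c e a = 0 := by simp [cY, det2]
      have Xc : cX a c e c = 1 := by unfold cX; exact div_self hD
      have Yc : cY a c e c = 0 := by unfold cY; rw [div_eq_zero_iff]; left; unfold det2; ring
      have Xe : cX a c e e = 0 := by unfold cX; rw [div_eq_zero_iff]; left; unfold det2; ring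
      have Ye : cY a c e e = 1 := by unfold cY; exact div_self hD
      rintro y (rfl | rfl | rfl)
      · simp [Xa, Ya]
      · simp [Xc, Yc]
      · simp [Xe, Ye]
    exact convexHull_min hsub hK hx
  · rintro ⟨h1, h2, h3⟩
    have hsum := (convex_convexHull ℝ ({a, c, e} : Set Pt)).sum_mem (t := Finset.univ)
      (w := ![1 - cX a c e x - cY a c e x, cX a c e x, cY a c e x]) (z := ![a, c, e])
      (by intro i _; fin_cases i <;> simp <;> linarith)
      (by simp [Fin.sum_univ_three]; ring)
      (by intro i _; apply subset_convexHull; fin_cases i <;> simp)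
    have : ∑ i : Fin 3, ![1 - cX a c e x - cY a c e x, cX a c e x, cY a c e x] i • ![a, c, e] i
        = x := by
      conv_rhs => rw [← frameMap_coord a c e x hD, frameMap_apply]
      simp only [Fin.sum_univ_three, Matrix.cons_val_zero, Matrix.cons_val_one, Matrix.cons_val]
      module
    rw [this] at hsum
    exact hsum

lemma mem_openTriangle_iff (a c e x : Pt) (hD : det2 (c - a) (e - a) ≠ 0) :
    x ∈ openTriangle a c e ↔
      0 < cX a c e x ∧ 0 < cY a c e x ∧ cX a c e x + cY a c e x < 1 := by
  unfold openTriangle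
  constructor
  · intro hx
    have key : ∀ u : Pt, ∃ s : ℝ, 0 < s ∧
        frameMap a c e (cX a c e x + s * u.1, cY a c e x + s * u.2) ∈ convexHull ℝ {a, c, e} := by
      intro u
      have hc : Continuous (fun s : ℝ => x + s • (u.1 • (c - a) + u.2 • (e - a))) := by fun_prop
      have ht := hc.tendsto 0
      simp only [zero_smul, add_zero] at ht
      obtain ⟨ε, he, hε⟩ := Metric.eventually_nhds_iff.1
        (ht.eventually (mem_interior_iff_mem_nhds.1 hx))
      refine ⟨ε / 2, by linarith, ?_⟩
      have := hε (y := ε / 2) (by simp [abs_of_pos he]; linarith)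
      have hE : frameMap a c e (cX a c e x + ε / 2 * u.1, cY a c e x + ε / 2 * u.2)
          = x + (ε / 2) • (u.1 • (c - a) + u.2 • (e - a)) := by
        conv_rhs => rw [← frameMap_coord a c e x hD]
        rw [frameMap_apply, frameMap_apply]
        module
      rw [hE]
      exact this
    refine ⟨?_, ?_, ?_⟩
    · obtain ⟨s, hs, h⟩ := key (-1, 0)
      rw [mem_hull_iff a c e _ hD, cX_frameMap a c e _ hD, cY_frameMap a c e _ hD] at h
      simp only at h; linarith
    · obtain ⟨s, hs, h⟩ := key (0, -1)
      rw [mem_hull_iff a c e _ hD, cX_frameMap a c e _ hD, cY_frameMap a c e _ hD] at h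
      simp only at h; linarith
    · obtain ⟨s, hs, h⟩ := key (1, 0)
      rw [mem_hull_iff a c e _ hD, cX_frameMap a c e _ hD, cY_frameMap a c e _ hD] at h
      simp only at h; linarith
  · rintro ⟨h1, h2, h3⟩
    rw [mem_interior]
    refine ⟨{x : Pt | 0 < cX a c e x ∧ 0 < cY a c e x ∧ cX a c e x + cY a c e x < 1}, ?_, ?_,
      h1, h2, h3⟩
    · rintro y ⟨y1, y2, y3⟩
      exact (mem_hull_iff a c e y hD).2 ⟨y1.le, y2.le, y3.le⟩
    · have cx : Continuous (cX a c e) := by unfold cX det2; fun_prop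
      have cy : Continuous (cY a c e) := by unfold cY det2; fun_prop
      exact (isOpen_lt continuous_const cx).inter
        ((isOpen_lt continuous_const cy).inter (isOpen_lt (cx.add cy) continuous_const))

lemma openTriangle_degenerate (a c e : Pt) (hce : c ≠ e) (hD : det2 (c - a) (e - a) = 0) :
    openTriangle a c e = ∅ := by
  rw [Set.eq_empty_iff_forall_notMem]
  intro x hx
  have hsub : convexHull ℝ {a, c, e} ⊆ {x : Pt | det2 (e - c) (x - c) = 0} := by
    apply convexHull_min
    · rintro y (rfl | rfl | rfl)
      · simp only [Set.mem_ofPred_eq]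
        rw [← hD]; simp [det2]; ring
      · simp [det2]
      · simp [det2]; ring
    · intro x hx y hy s t hs ht hst
      simp only [Set.mem_ofPred_eq] at hx hy ⊢
      have : s = 1 - t := by linarith
      subst this
      have e1 : det2 (e - c) ((1 - t) • x + t • y - c)
        = (1 - t) * det2 (e - c) (x - c) + t * det2 (e - c) (y - c) := by simp [det2]; ring
      rw [e1, hx, hy]; simp
  have hc : Continuous (fun s : ℝ => x + s • ((-(e - c).2, (e - c).1) : Pt)) := by fun_prop
  have ht := hc.tendsto 0
  simp only [zero_smul, add_zero] at ht
  obtain ⟨ε, he, hε⟩ := Metric.eventually_nhds_iff.1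
    (ht.eventually (mem_interior_iff_mem_nhds.1 hx))
  have h1 := hsub (hε (y := ε / 2) (by simp [abs_of_pos he]; linarith))
  have h2 := hsub (interior_subset hx)
  simp only [Set.mem_ofPred_eq] at h1 h2
  have e1 : det2 (e - c) (x + (ε / 2) • ((-(e - c).2, (e - c).1) : Pt) - c)
    = det2 (e - c) (x - c) + (ε / 2) * ((e - c).1 ^ 2 + (e - c).2 ^ 2) := by simp [det2]; ring
  rw [e1, h2, zero_add] at h1
  have h3 : (e - c).1 ^ 2 + (e - c).2 ^ 2 = 0 := by
    rcases mul_eq_zero.1 h1 with h | h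
    · linarith
    · exact h
  apply hce
  have h4 : (e - c).1 = 0 := by nlinarith [sq_nonneg (e - c).1, sq_nonneg (e - c).2]
  have h5 : (e - c).2 = 0 := by nlinarith [sq_nonneg (e - c).1, sq_nonneg (e - c).2]
  simp only [Prod.fst_sub, Prod.snd_sub] at h4 h5
  ext <;> linarith

/-- The hexagon in normalized coordinates. -/
noncomputable def normHex (v : Fin 6 → Pt) (i : Fin 6) : Pt :=
  (cX (v 0) (v 2) (v 4) (v i), cY (v 0) (v 2) (v 4) (v i))

lemma mem_segment_norm (v : Fin 6 → Pt) (hD : det2 (v 2 - v 0) (v 4 - v 0) ≠ 0) (i j : Fin 6)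
    (x : Pt) : x ∈ segment ℝ (normHex v i) (normHex v j) ↔
      frameMap (v 0) (v 2) (v 4) x ∈ segment ℝ (v i) (v j) := by
  have h := image_segment ℝ (frameMap (v 0) (v 2) (v 4)) (normHex v i) (normHex v j)
  unfold normHex at h ⊢
  rw [frameMap_coord _ _ _ _ hD, frameMap_coord _ _ _ _ hD] at h
  rw [← h, (frameMap_injective _ _ _ hD).mem_set_image]

lemma mem_boundary_norm (v : Fin 6 → Pt) (hD : det2 (v 2 - v 0) (v 4 - v 0) ≠ 0)
    (x : Pt) : x ∈ polyBoundary (normHex v) ↔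
      frameMap (v 0) (v 2) (v 4) x ∈ polyBoundary v := by
  unfold polyBoundary
  simp only [Set.mem_iUnion, mem_segment_norm v hD]

lemma eq_normHex_iff (v : Fin 6 → Pt) (hD : det2 (v 2 - v 0) (v 4 - v 0) ≠ 0) (i : Fin 6)
    (x : Pt) : frameMap (v 0) (v 2) (v 4) x = v i ↔ x = normHex v i := by
  have : v i = frameMap (v 0) (v 2) (v 4) (normHex v i) := (frameMap_coord _ _ _ _ hD).symm
  constructor
  · intro h
    rw [this] at h
    exact frameMap_injective _ _ _ hD h
  · rintro rfl
    exact this.symm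

lemma normHex_simple (v : Fin 6 → Pt) (hs : IsSimplePolygon v)
    (hD : det2 (v 2 - v 0) (v 4 - v 0) ≠ 0) : IsSimplePolygon (normHex v) := by
  obtain ⟨h3, hinj, hsim⟩ := hs
  refine ⟨h3, ?_, ?_⟩
  · intro i j hij
    apply hinj
    rw [← frameMap_coord (v 0) (v 2) (v 4) (v i) hD, ← frameMap_coord (v 0) (v 2) (v 4) (v j) hD]
    exact congrArg _ hij
  · rintro i j hij x ⟨hx, hy⟩
    rw [mem_segment_norm v hD] at hx hy
    have := hsim i j hij ⟨hx, hy⟩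
    simpa only [Set.mem_inter_iff, Set.mem_insert_iff, Set.mem_singleton_iff,
      eq_normHex_iff v hD] using this

lemma normHex_zero (v : Fin 6 → Pt) : normHex v 0 = (0, 0) := by
  simp [normHex, cX, cY, det2]

lemma normHex_two (v : Fin 6 → Pt) (hD : det2 (v 2 - v 0) (v 4 - v 0) ≠ 0) :
    normHex v 2 = (1, 0) := by
  have : det2 (v 2 - v 0) (v 2 - v 0) = 0 := by unfold det2; ring
  simp [normHex, cX, cY, div_self hD, this]

lemma normHex_four (v : Fin 6 → Pt) (hD : det2 (v 2 - v 0) (v 4 - v 0) ≠ 0) :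
    normHex v 4 = (0, 1) := by
  have : det2 (v 4 - v 0) (v 4 - v 0) = 0 := by unfold det2; ring
  simp [normHex, cX, cY, div_self hD, this]

lemma no_ear (v : Fin 6 → Pt) (hs : IsSimplePolygon v)
    (hD : det2 (v 2 - v 0) (v 4 - v 0) ≠ 0)
    (hT : openTriangle (v 0) (v 2) (v 4) ⊆ polyInterior v) :
    det2 (v 2 - v 0) (v 1 - v 0) / det2 (v 2 - v 0) (v 4 - v 0) ≤ 0 := by
  by_contra hc
  push Not at hc
  have hTb : ∀ x1 x2 : ℝ, 0 < x1 → 0 < x2 → x1 + x2 < 1 →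
      frameMap (v 0) (v 2) (v 4) (x1, x2) ∈ polyInterior v := by
    intro x1 x2 h1 h2 h3
    apply hT
    rw [mem_openTriangle_iff _ _ _ _ hD, cX_frameMap _ _ _ _ hD, cY_frameMap _ _ _ _ hD]
    exact ⟨h1, h2, h3⟩
  obtain ⟨z, hz0, hz1, hz⟩ := ear_lemma (normHex v) (normHex_simple v hs hD) (normHex_zero v)
    (normHex_two v hD) (normHex_four v hD)
    (fun x1 x2 h1 h2 h3 h => (hTb x1 x2 h1 h2 h3).1 ((mem_boundary_norm v hD _).1 h)) hc
  have hin := hTb z ((1 - z) / 2) hz0 (by linarith) (by linarith)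
  refine not_polyInterior_of_ray v _ (-(v 4 - v 0)) ?_ ?_ hin
  · intro h
    apply hD
    rw [neg_eq_zero] at h
    rw [h]; simp [det2]
  · intro s hs h
    refine hz ((1 - z) / 2 - s) (by linarith) ((mem_boundary_norm v hD _).2 ?_)
    convert h using 1
    rw [frameMap_apply, frameMap_apply]
    module

lemma rot_boundary (v : Fin 6 → Pt) : polyBoundary (fun i => v (i + 2)) = polyBoundary v := by
  unfold polyBoundary
  have : ∀ i : Fin 6, segment ℝ (v (i + 2)) (v (i + 1 + 2)) =
      segment ℝ (v (i + 2)) (v (i + 2 + 1)) := by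
    intro i; rw [add_right_comm]
  simp only [this]
  exact (Equiv.addRight (2 : Fin 6)).surjective.iUnion_comp
    (fun i => segment ℝ (v i) (v (i + 1)))

lemma rot_interior (v : Fin 6 → Pt) : polyInterior (fun i => v (i + 2)) = polyInterior v := by
  unfold polyInterior
  rw [rot_boundary]

lemma rot_simple (v : Fin 6 → Pt) (hs : IsSimplePolygon v) :
    IsSimplePolygon (fun i => v (i + 2)) := by
  obtain ⟨h3, hinj, hsim⟩ := hs
  refine ⟨h3, fun i j h => by simpa using hinj h, ?_⟩
  intro i j hij
  have := hsim (i + 2) (j + 2) (by simpa using hij)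
  simp only [add_right_comm _ (1 : Fin 6) 2]
  exact this

lemma openTriangle_rot (a c e : Pt) : openTriangle c e a = openTriangle a c e := by
  unfold openTriangle
  congr 2
  ext x; simp only [Set.mem_insert_iff, Set.mem_singleton_iff]; tauto

lemma interval_lemma (A B t0 t1 t : ℝ) (h0 : t0 < t) (h1 : t < t1) (h : 0 < A * (1 - t) + B * t) :
    ∃ s0 s1 : ℝ, t0 ≤ s0 ∧ s1 ≤ t1 ∧ ∀ r : ℝ,
      (t0 < r ∧ r < t1 ∧ 0 < A * (1 - r) + B * r) ↔ (s0 < r ∧ r < s1) := by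
  have key : ∀ r, A * (1 - r) + B * r = A + (B - A) * r := by intro r; ring
  rcases lt_trichotomy (B - A) 0 with hB | hB | hB
  · refine ⟨t0, min t1 (A / (A - B)), le_rfl, min_le_left _ _, fun r => ?_⟩
    rw [lt_min_iff, lt_div_iff₀ (by linarith), key]
    constructor
    · rintro ⟨a, b, c⟩; exact ⟨a, b, by linarith⟩
    · rintro ⟨a, b, c⟩; exact ⟨a, b, by linarith⟩
  · refine ⟨t0, t1, le_rfl, le_rfl, fun r => ?_⟩
    have hAB : B = A := by linarith
    subst hAB
    constructor
    · rintro ⟨a, b, c⟩; exact ⟨a, b⟩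
    · rintro ⟨a, b⟩; exact ⟨a, b, by linarith⟩
  · refine ⟨max t0 (-A / (B - A)), t1, le_max_left _ _, le_rfl, fun r => ?_⟩
    rw [max_lt_iff, div_lt_iff₀ hB, key]
    constructor
    · rintro ⟨a, b, c⟩; exact ⟨⟨a, by linarith⟩, b⟩
    · rintro ⟨⟨a, c⟩, b⟩; exact ⟨a, b, by linarith⟩
/-- Lemma 1 (lemma:alfa).  Let `abcdef` be a simple counterclockwise hexagon with
independent triple `{a, c, e}`.  If the open triangle `△(ace)` is contained in the
hexagon, then `△(ace) ∩ Wedge(a)` is a triangle `conv{a, c', e'}` minus its boundary,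
where `c'e'` is a nondegenerate subsegment of `ce`. -/
theorem lemma_alfa (v : Fin 6 → Pt)
    (hsimple : IsSimplePolygon v) (hccw : IsCCW v)
    (htri : openTriangle (v 0) (v 2) (v 4) ⊆ polyRegion v) :
    ∃ c' e' : Pt, c' ∈ segment ℝ (v 2) (v 4) ∧ e' ∈ segment ℝ (v 2) (v 4) ∧ c' ≠ e' ∧
      openTriangle (v 0) (v 2) (v 4) ∩ Wedge v 0 =
        convexHull ℝ {v 0, c', e'} \ frontier (convexHull ℝ {v 0, c', e'}) := by
  have hne24 : v 2 ≠ v 4 := fun h => absurd (hsimple.2.1 h) (by decide)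
  have hRHS : ∀ c' e' : Pt, convexHull ℝ {v 0, c', e'} \ frontier (convexHull ℝ {v 0, c', e'})
      = openTriangle (v 0) c' e' := fun c' e' => self_diff_frontier _
  simp only [hRHS]
  by_cases hD : det2 (v 2 - v 0) (v 4 - v 0) = 0
  · refine ⟨v 2, v 4, left_mem_segment _ _ _, right_mem_segment _ _ _, hne24, ?_⟩
    rw [openTriangle_degenerate _ _ _ hne24 hD, Set.empty_inter]
  have hTI := tri_subset_interior v hsimple _ isOpen_interior htri
  change openTriangle (v 0) (v 2) (v 4) ⊆ polyInterior v at hTI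
  -- the three ears
  have E1 := no_ear v hsimple hD hTI
  have D2eq : det2 (v 4 - v 2) (v 0 - v 2) = det2 (v 2 - v 0) (v 4 - v 0) := by
    simp [det2]; ring
  have D3eq : det2 (v 0 - v 4) (v 2 - v 4) = det2 (v 2 - v 0) (v 4 - v 0) := by
    simp [det2]; ring
  have hs2 := rot_simple v hsimple
  have hs3 := rot_simple _ hs2
  have E2 := no_ear (fun i => v (i + 2)) hs2
    (show det2 (v 4 - v 2) (v 0 - v 2) ≠ 0 by rw [D2eq]; exact hD) (by
      rw [rot_interior]
      change openTriangle (v 2) (v 4) (v 0) ⊆ _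
      rw [openTriangle_rot]; exact hTI)
  change det2 (v 4 - v 2) (v 3 - v 2) / det2 (v 4 - v 2) (v 0 - v 2) ≤ 0 at E2
  have E3 := no_ear (fun i => v (i + 2 + 2)) hs3
    (show det2 (v 0 - v 4) (v 2 - v 4) ≠ 0 by rw [D3eq]; exact hD) (by
      rw [rot_interior (fun i => v (i + 2)), rot_interior]
      change openTriangle (v 4) (v 0) (v 2) ⊆ _
      rw [openTriangle_rot (v 2) (v 4) (v 0), openTriangle_rot (v 0) (v 2) (v 4)]
      exact hTI)
  change det2 (v 0 - v 4) (v 5 - v 4) / det2 (v 0 - v 4) (v 2 - v 4) ≤ 0 at E3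
  rw [D2eq] at E2
  rw [D3eq] at E3
  have harea : signedArea2 v = det2 (v 2 - v 0) (v 4 - v 0) - det2 (v 2 - v 0) (v 1 - v 0)
      - det2 (v 4 - v 2) (v 3 - v 2) - det2 (v 0 - v 4) (v 5 - v 4) := by
    have : signedArea2 v = det2 (v 0) (v 1) + det2 (v 1) (v 2) + det2 (v 2) (v 3)
        + det2 (v 3) (v 4) + det2 (v 4) (v 5) + det2 (v 5) (v 0) := by
      unfold signedArea2
      rw [Fin.sum_univ_six]
      rfl
    rw [this]
    simp [det2]; ring
  have hDpos : 0 < det2 (v 2 - v 0) (v 4 - v 0) := by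
    by_contra hc
    have hneg : det2 (v 2 - v 0) (v 4 - v 0) < 0 := lt_of_le_of_ne (not_lt.1 hc) hD
    have hccw' : 0 < signedArea2 v := hccw
    rw [div_le_iff_of_neg hneg] at E1 E2 E3
    linarith
  have E3' : (normHex v 5).1 ≤ 0 := by
    have : det2 (v 0 - v 4) (v 5 - v 4) = det2 (v 5 - v 0) (v 4 - v 0) := by simp [det2]; ring
    rw [this] at E3
    exact E3
  obtain ⟨y1, y2, hy1, hy2, hyb, hyf⟩ := cone_lemma (normHex v) (normHex_simple v hsimple hD)
    (normHex_zero v) (normHex_two v hD) (normHex_four v hD) E1 E3'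
  have hW : ∀ x, x ∈ openTriangle (v 0) (v 2) (v 4) ∩ Wedge v 0 ↔
      (0 < cX (v 0) (v 2) (v 4) x ∧ 0 < cY (v 0) (v 2) (v 4) x ∧
        cX (v 0) (v 2) (v 4) x + cY (v 0) (v 2) (v 4) x < 1) ∧
      0 < (normHex v 1).1 * cY (v 0) (v 2) (v 4) x - (normHex v 1).2 * cX (v 0) (v 2) (v 4) x ∧
      0 < (normHex v 5).2 * cX (v 0) (v 2) (v 4) x - (normHex v 5).1 * cY (v 0) (v 2) (v 4) x := by
    intro x
    have hx := frameMap_coord (v 0) (v 2) (v 4) x hD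
    have hb : frameMap (v 0) (v 2) (v 4) (normHex v 1) = v 1 := frameMap_coord _ _ _ _ hD
    have hf : frameMap (v 0) (v 2) (v 4) (normHex v 5) = v 5 := frameMap_coord _ _ _ _ hD
    rw [frameMap_apply] at hx hb hf
    have hL : x ∈ Lhp (v (0 - 1)) (v 0) ↔ 0 < (normHex v 5).2 * cX (v 0) (v 2) (v 4) x
        - (normHex v 5).1 * cY (v 0) (v 2) (v 4) x := by
      change 0 < det2 (v 0 - v 5) (x - v 5) ↔ _
      have : det2 (v 0 - v 5) (x - v 5) = det2 (v 2 - v 0) (v 4 - v 0) *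
        ((normHex v 5).2 * cX (v 0) (v 2) (v 4) x
          - (normHex v 5).1 * cY (v 0) (v 2) (v 4) x) := by
        conv_lhs => rw [← hx, ← hf]
        simp [det2]; ring
      rw [this, mul_pos_iff_of_pos_left hDpos]
    have hR : x ∈ Rhp (v (0 + 1)) (v 0) ↔ 0 < (normHex v 1).1 * cY (v 0) (v 2) (v 4) x
        - (normHex v 1).2 * cX (v 0) (v 2) (v 4) x := by
      change det2 (v 0 - v 1) (x - v 1) < 0 ↔ _
      have : det2 (v 0 - v 1) (x - v 1) = -(det2 (v 2 - v 0) (v 4 - v 0) *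
        ((normHex v 1).1 * cY (v 0) (v 2) (v 4) x
          - (normHex v 1).2 * cX (v 0) (v 2) (v 4) x)) := by
        conv_lhs => rw [← hx, ← hb]
        simp [det2]; ring
      rw [this, neg_lt_zero, mul_pos_iff_of_pos_left hDpos]
    rw [← mem_openTriangle_iff _ _ _ _ hD, ← hL, ← hR]
    constructor
    · rintro ⟨h1, ⟨h2, h3⟩, h4⟩
      exact ⟨h1, h3, h2⟩
    · rintro ⟨h1, h3, h2⟩
      exact ⟨h1, ⟨h2, h3⟩, hTI h1⟩
  generalize (normHex v 1).1 = b1 at *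
  generalize (normHex v 1).2 = b2 at *
  generalize (normHex v 5).1 = f1 at *
  generalize (normHex v 5).2 = f2 at *
  have hyS : 0 < y1 + y2 := by linarith
  have hrel : ∀ X Y A B : ℝ, 0 < X + Y →
      A * (1 - Y / (X + Y)) + B * (Y / (X + Y)) = (A * X + B * Y) / (X + Y) := by
    intro X Y A B h
    field_simp; ring
  have ht0 : 0 < y2 / (y1 + y2) := by positivity
  have ht1 : y2 / (y1 + y2) < 1 := by rw [div_lt_one hyS]; linarith
  have htb : 0 < -b2 * (1 - y2 / (y1 + y2)) + b1 * (y2 / (y1 + y2)) := by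
    rw [hrel _ _ _ _ hyS]; exact div_pos (by linarith) hyS
  have htf : 0 < f2 * (1 - y2 / (y1 + y2)) + -f1 * (y2 / (y1 + y2)) := by
    rw [hrel _ _ _ _ hyS]; exact div_pos (by linarith) hyS
  obtain ⟨s0, s1, hs0, hs1, hI⟩ := interval_lemma _ _ 0 1 _ ht0 ht1 htb
  obtain ⟨hu0, hu1⟩ := (hI _).1 ⟨ht0, ht1, htb⟩
  obtain ⟨r0, r1, hr0, hr1, hJ⟩ := interval_lemma _ _ s0 s1 _ hu0 hu1 htf
  obtain ⟨hw0, hw1⟩ := (hJ _).1 ⟨hu0, hu1, htf⟩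
  have hr : r0 < r1 := hw0.trans hw1
  have hD' : det2 (frameMap (v 0) (v 2) (v 4) (1 - r0, r0) - v 0)
      (frameMap (v 0) (v 2) (v 4) (1 - r1, r1) - v 0)
      = det2 (v 2 - v 0) (v 4 - v 0) * (r1 - r0) := by
    rw [frameMap_apply, frameMap_apply]
    simp [det2]; ring
  have hD'pos : 0 < det2 (frameMap (v 0) (v 2) (v 4) (1 - r0, r0) - v 0)
      (frameMap (v 0) (v 2) (v 4) (1 - r1, r1) - v 0) := by
    rw [hD']; exact mul_pos hDpos (by linarith)
  have hseg : ∀ r : ℝ, 0 ≤ r → r ≤ 1 →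
      frameMap (v 0) (v 2) (v 4) (1 - r, r) ∈ segment ℝ (v 2) (v 4) := by
    intro r h0 h1
    refine ⟨1 - r, r, by linarith, h0, by ring, ?_⟩
    rw [frameMap_apply]
    module
  refine ⟨frameMap (v 0) (v 2) (v 4) (1 - r0, r0), frameMap (v 0) (v 2) (v 4) (1 - r1, r1),
    hseg _ (by linarith) (by linarith), hseg _ (by linarith) (by linarith), ?_, ?_⟩
  · intro h
    have := frameMap_injective _ _ _ hD h
    simp only [Prod.mk.injEq] at this
    linarith
  · ext x
    rw [hW, mem_openTriangle_iff _ _ _ _ hD'pos.ne']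
    have hx := frameMap_coord (v 0) (v 2) (v 4) x hD
    have hX : cX (v 0) (frameMap (v 0) (v 2) (v 4) (1 - r0, r0))
        (frameMap (v 0) (v 2) (v 4) (1 - r1, r1)) x =
        (cX (v 0) (v 2) (v 4) x * r1 - cY (v 0) (v 2) (v 4) x * (1 - r1)) / (r1 - r0) := by
      conv_lhs => rw [cX, hD', ← hx]
      rw [div_eq_div_iff (by rw [← hD']; exact hD'pos.ne') (by linarith)]
      generalize cX (v 0) (v 2) (v 4) x = X
      generalize cY (v 0) (v 2) (v 4) x = Y
      simp only [frameMap_apply]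
      simp [det2]; ring
    have hY : cY (v 0) (frameMap (v 0) (v 2) (v 4) (1 - r0, r0))
        (frameMap (v 0) (v 2) (v 4) (1 - r1, r1)) x =
        ((1 - r0) * cY (v 0) (v 2) (v 4) x - r0 * cX (v 0) (v 2) (v 4) x) / (r1 - r0) := by
      conv_lhs => rw [cY, hD', ← hx]
      rw [div_eq_div_iff (by rw [← hD']; exact hD'pos.ne') (by linarith)]
      generalize cX (v 0) (v 2) (v 4) x = X
      generalize cY (v 0) (v 2) (v 4) x = Y
      simp only [frameMap_apply]
      simp [det2]; ring
    rw [hX, hY]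
    generalize cX (v 0) (v 2) (v 4) x = X
    generalize cY (v 0) (v 2) (v 4) x = Y
    have hrp : 0 < r1 - r0 := by linarith
    have hsum : (X * r1 - Y * (1 - r1)) / (r1 - r0) + ((1 - r0) * Y - r0 * X) / (r1 - r0)
        = X + Y := by
      field_simp; ring
    rw [hsum, div_pos_iff_of_pos_right hrp, div_pos_iff_of_pos_right hrp]
    have hiff : 0 < X + Y → ((0 < X ∧ 0 < Y ∧ 0 < b1 * Y - b2 * X ∧ 0 < f2 * X - f1 * Y) ↔
        (0 < X * r1 - Y * (1 - r1) ∧ 0 < (1 - r0) * Y - r0 * X)) := by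
      intro hS
      have h1 := hI (Y / (X + Y))
      have h2 := hJ (Y / (X + Y))
      have a5 : 0 < (-b2 * X + b1 * Y) / (X + Y) ↔ 0 < -b2 * X + b1 * Y :=
        div_pos_iff_of_pos_right hS
      have a6 : 0 < (f2 * X + -f1 * Y) / (X + Y) ↔ 0 < f2 * X + -f1 * Y :=
        div_pos_iff_of_pos_right hS
      rw [hrel _ _ _ _ hS, a5] at h1
      rw [hrel _ _ _ _ hS, a6] at h2
      have a1 : 0 < Y / (X + Y) ↔ 0 < Y := div_pos_iff_of_pos_right hS
      have a2 : Y / (X + Y) < 1 ↔ 0 < X := by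
        rw [div_lt_one hS]; constructor <;> intro h <;> linarith
      have a3 : r0 < Y / (X + Y) ↔ 0 < (1 - r0) * Y - r0 * X := by
        rw [lt_div_iff₀ hS]; constructor <;> intro h <;> linarith
      have a4 : Y / (X + Y) < r1 ↔ 0 < X * r1 - Y * (1 - r1) := by
        rw [div_lt_iff₀ hS]; constructor <;> intro h <;> linarith
      rw [a1, a2] at h1
      rw [a3, a4] at h2
      constructor
      · rintro ⟨p1, p2, p3, p4⟩
        have q := h1.1 ⟨p2, p1, by linarith⟩
        have q2 := h2.1 ⟨q.1, q.2, by linarith⟩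
        exact ⟨q2.2, q2.1⟩
      · rintro ⟨p1, p2⟩
        have q := h2.2 ⟨p2, p1⟩
        have q2 := h1.2 ⟨q.1, q.2.1⟩
        exact ⟨q2.2.1, q2.1, by linarith [q2.2.2], by linarith [q.2.2]⟩
    constructor
    · rintro ⟨⟨p1, p2, p3⟩, p4, p5⟩
      have q := (hiff (by linarith)).1 ⟨p1, p2, p4, p5⟩
      exact ⟨q.1, q.2, p3⟩
    · rintro ⟨p1, p2, p3⟩
      have hS : 0 < X + Y := by
        rw [← hsum]
        exact add_pos (div_pos p1 hrp) (div_pos p2 hrp)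
      have q := (hiff hS).2 ⟨p1, p2⟩
      exact ⟨⟨q.1, q.2.1, p3⟩, q.2.2.1, q.2.2.2⟩
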